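/- Fix integers n ≥ 3 and d ≥ 2 and a real ε > 0. There exists a constant C > 0, depending only on n, d and ε, such that for every prime p and every nontrivial irreducible unitary representation π of SLₙ(ℤ/pℤ), the proportion of tuples S = (g₁, …, g_d) ∈ (SLₙ(ℤ/pℤ))^d (with respect to the uniform measure on the d-fold product) satisfying D(μ_{π,S}, f_{2d}) ≤ ε is at least 1 − C·p^{−1}. -/

import Mathlib

open MeasureTheory

noncomputable section

abbrev SL (n p : ℕ) := Matrix.SpecialLinearGroup (Fin n) (ZMod p)

/-- Density of the Kesten–McKay law with parameter `2d`. -/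
noncomputable def kmDensity (d : ℕ) (x : ℝ) : ℝ :=
  if x ^ 2 ≤ 4 * (2 * (d : ℝ) - 1) then
    2 * d * Real.sqrt (4 * (2 * (d : ℝ) - 1) - x ^ 2) /
      (2 * Real.pi * ((2 * (d : ℝ)) ^ 2 - x ^ 2))
  else 0

/-- The Kesten–McKay law with parameter `2d`, as a measure on `ℝ`. -/
noncomputable def kestenMcKay (d : ℕ) : Measure ℝ :=
  MeasureTheory.volume.withDensity fun x => ENNReal.ofReal (kmDensity d x)

/-- Discrepancy between two measures on ℝ. -/
noncomputable def discrepancy (ν μ : Measure ℝ) : ℝ :=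
  sSup {r : ℝ | ∃ a b : ℝ, a ≤ b ∧
    r = |(ν (Set.Icc a b)).toReal - (μ (Set.Icc a b)).toReal|}

/-- The element of the free group on `d` generators given by a word of length `m`. -/
def wordProd {d m : ℕ} (w : Fin m → Fin d × Bool) : FreeGroup (Fin d) :=
  (List.ofFn fun j => if (w j).2 then FreeGroup.of (w j).1 else (FreeGroup.of (w j).1)⁻¹).prod

/-- Evaluation of a word of length `m` in `d` letters at a tuple `S`. -/
def wordEval {G : Type*} [Group G] {d m : ℕ} (S : Fin d → G) (w : Fin m → Fin d × Bool) : G :=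
  (List.ofFn fun j => if (w j).2 then S (w j).1 else (S (w j).1)⁻¹).prod

/-- `N(d,m)`: the number of trivial words of length `m` in `d` letters. -/
noncomputable def Ntriv (d m : ℕ) : ℕ :=
  Nat.card {w : Fin m → Fin d × Bool // wordProd w = 1}

/-- `A_{π,S} = Σᵢ (π gᵢ + (π gᵢ)⁻¹)`. -/
noncomputable def Amat {G : Type*} [Group G] {n d : ℕ}
    (π : G →* Matrix.unitaryGroup (Fin n) ℂ) (S : Fin d → G) : Matrix (Fin n) (Fin n) ℂ :=
  ∑ i, ((π (S i) : Matrix (Fin n) (Fin n) ℂ) + ((π (S i))⁻¹ : Matrix (Fin n) (Fin n) ℂ))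

/-- Spectral probability measure of a Hermitian matrix. -/
noncomputable def specMeasure {n : ℕ} (A : Matrix (Fin n) (Fin n) ℂ) : Measure ℝ := by
  classical
  exact if hA : A.IsHermitian then
    (n : ENNReal)⁻¹ • ∑ j : Fin n, Measure.dirac (hA.eigenvalues j) else 0

/-- A unitary representation is irreducible if the only invariant subspaces are `⊥` and `⊤`. -/
def IsIrreducibleRep {G : Type*} [Group G] {n : ℕ}
    (π : G →* Matrix.unitaryGroup (Fin n) ℂ) : Prop :=
  ∀ W : Submodule ℂ (Fin n → ℂ),
    (∀ g : G, ∀ v ∈ W, (π g : Matrix (Fin n) (Fin n) ℂ).mulVec v ∈ W) → W = ⊥ ∨ W = ⊤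

/-- Number of eigenvalues of a Hermitian matrix with `|λ| > t`, with multiplicity. -/
noncomputable def excCount {n : ℕ} (A : Matrix (Fin n) (Fin n) ℂ) (t : ℝ) : ℕ := by
  classical
  exact if hA : A.IsHermitian then
    (Finset.univ.filter fun j : Fin n => t < |hA.eigenvalues j|).card else 0

end

/-!
By orthogonality of the polynomials counting spheres in the free group `F_d`, the moment of the
Kesten–McKay law along a polynomial `P` is the coefficient at `1` of `P (∑ (s + s⁻¹))`, computed in
the group ring of `F_d`, whereas the moment of `μ_{π,S}` is `∑ c_w tr π(w(S)) / dim π` over the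
coefficients `c_w` of that element. The two differ only through the words `w ≠ 1`.

For `w ≠ 1` and all but a proportion `O(1/p)` of the tuples `S`, the matrix `w(S)` has a cyclic
vector, so its centralizer has at most `pⁿ` elements: the determinant of the vectors
`v, w(S) v, …, w(S)ⁿ⁻¹ v` is a polynomial in the entries of `S`, it is not the zero polynomial
because the symmetric power of a ping-pong tuple of `2 × 2` matrices makes it nonzero, and the
Schwartz–Zippel lemma bounds its zeros. Column orthogonality then gives `|tr π(w(S))|² ≤ pⁿ`. On
the other hand the nontrivial elements of the unipotent group of a row are conjugate to each other,
so the restriction of `π` to it contains every nontrivial character and `dim π ≥ pⁿ⁻¹ - 1`. As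
`n ≥ 3`, the normalized trace is `O(p^(-1/2))`.

Finally, as the Kesten–McKay law has compact support and bounded density, finitely many polynomial
moments control the discrepancy to it.
-/

noncomputable section FreeGroupSpheres

open Polynomial

variable {α : Type*} [DecidableEq α]

theorem exists_letter_norm_mul {w : FreeGroup α} (hw : w ≠ 1) :
    ∃ s₀ : α × Bool, ∀ s,
      (FreeGroup.mk [s] * w).norm = if s = s₀ then w.norm - 1 else w.norm + 1 := by
  obtain ⟨t, L, hL⟩ := List.exists_cons_of_ne_nil (mt FreeGroup.toWord_eq_nil_iff.1 hw)
  refine ⟨(t.1, !t.2), fun s => ?_⟩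
  have hmul : (FreeGroup.mk [s] * w).toWord = FreeGroup.reduce (s :: t :: L) := by
    rw [FreeGroup.toWord_mul, FreeGroup.toWord_mk, ← hL]
    rfl
  have hred : FreeGroup.reduce (t :: L) = t :: L := by rw [← hL, FreeGroup.reduce_toWord]
  rw [FreeGroup.norm, hmul, FreeGroup.reduce.cons, hred, FreeGroup.norm, hL]
  by_cases h : s = (t.1, !t.2)
  · simp [h]
  · have hcancel : ¬(s.1 = t.1 ∧ s.2 = !t.2) := fun h' => h (Prod.ext h'.1 h'.2)
    simp [hcancel, h]

variable [Fintype α]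

theorem sum_letter_norm_mul {R : Type*} [CommRing R] (f : ℕ → R) (w : FreeGroup α) :
    ∑ s : α × Bool, f (FreeGroup.mk [s] * w).norm =
      if w = 1 then 2 * Fintype.card α * f 1
      else f (w.norm - 1) + (2 * Fintype.card α - 1) * f (w.norm + 1) := by
  have hcard : (Fintype.card (α × Bool) : R) = 2 * Fintype.card α := by
    simp [mul_comm]
  split_ifs with hw
  · have hone (s : α × Bool) : (FreeGroup.mk [s] * w).norm = 1 := by simp [hw, FreeGroup.norm]
    simp [hone, ← hcard]
  · obtain ⟨s₀, hs₀⟩ := exists_letter_norm_mul hw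
    have hsplit (s : α × Bool) : f (FreeGroup.mk [s] * w).norm =
        f (w.norm + 1) + if s = s₀ then f (w.norm - 1) - f (w.norm + 1) else 0 := by
      rw [hs₀]; split_ifs <;> ring
    simp only [hsplit, Finset.sum_add_distrib, Finset.sum_const, Finset.sum_ite_eq',
      Finset.mem_univ, if_true, nsmul_eq_mul, Finset.card_univ, hcard]
    ring

/-- The adjacency element `∑ (s + s⁻¹)` of the group algebra of a free group, `s` running over the
generators: the universal version of `Amat`. -/
def freeGroupAdjacency (R α : Type*) [CommRing R] [Fintype α] : MonoidAlgebra R (FreeGroup α) :=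
  ∑ i, (MonoidAlgebra.of R _ (FreeGroup.of i) + MonoidAlgebra.of R _ (FreeGroup.of i)⁻¹)

omit [DecidableEq α] in
theorem coeff_freeGroupAdjacency_mul {R : Type*} [CommRing R]
    (f : MonoidAlgebra R (FreeGroup α)) (w : FreeGroup α) :
    (freeGroupAdjacency R α * f).coeff w =
      ∑ s : α × Bool, f.coeff (FreeGroup.mk [s] * w) := by
  have hpos (i : α) : FreeGroup.mk [(i, true)] = FreeGroup.of i := rfl
  have hneg (i : α) : FreeGroup.mk [(i, false)] = (FreeGroup.of i)⁻¹ := rfl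
  rw [Fintype.sum_prod_type]
  simp [freeGroupAdjacency, Finset.sum_mul, add_mul, hpos, hneg, add_comm]

/-- The polynomials which, evaluated at the adjacency operator of the `(q + 1)`-regular tree, count
vertices at distance exactly `k`. They are the orthogonal polynomials of the Kesten–McKay law. -/
def spherePoly {R : Type*} [CommRing R] (q : R) : ℕ → R[X]
  | 0 => 1
  | 1 => X
  | 2 => X * X - C (q + 1)
  | k + 3 => X * spherePoly q (k + 2) - C q * spherePoly q (k + 1)

theorem coeff_aeval_spherePoly {R : Type*} [CommRing R] (k : ℕ) (w : FreeGroup α) :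
    (aeval (freeGroupAdjacency R α) (spherePoly (2 * (Fintype.card α : R) - 1) k)).coeff w =
      if w.norm = k then 1 else 0 := by
  set A := freeGroupAdjacency R α
  set q : R := 2 * Fintype.card α - 1
  have hstep (j : ℕ) (hj : ∀ v, (aeval A (spherePoly q j)).coeff v = if v.norm = j then 1 else 0)
      (w : FreeGroup α) : (A * aeval A (spherePoly q j)).coeff w =
        if w = 1 then (q + 1) * (if 1 = j then 1 else 0)
        else (if w.norm - 1 = j then 1 else 0) + q * (if w.norm + 1 = j then 1 else 0) := by
    rw [coeff_freeGroupAdjacency_mul]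
    simp only [hj, sum_letter_norm_mul (fun m => if m = j then (1 : R) else 0), q, sub_add_cancel]
  have hconst (c : R) (w : FreeGroup α) :
      (algebraMap R (MonoidAlgebra R (FreeGroup α)) c).coeff w = if w = 1 then c else 0 := by
    simp [MonoidAlgebra.coe_algebraMap, Finsupp.single_apply, eq_comm (a := w)]
  have hnorm (w : FreeGroup α) : w = 1 ↔ w.norm = 0 := FreeGroup.norm_eq_zero.symm
  induction k using Nat.strong_induction_on generalizing w with
  | _ k ih =>
    match k with
    | 0 => simpa only [spherePoly, map_one, hnorm] using hconst 1 w
    | 1 =>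
      have h := hstep 0 (ih 0 (by omega)) w
      rw [spherePoly, map_one, mul_one] at h
      rw [spherePoly, aeval_X, h]
      simp only [hnorm]
      split_ifs <;> first | contradiction | omega | simp
    | 2 =>
      have h := hstep 1 (ih 1 (by omega)) w
      rw [spherePoly, aeval_X] at h
      rw [spherePoly, map_sub, map_mul, aeval_X, aeval_C, MonoidAlgebra.coeff_sub,
        Finsupp.sub_apply, h, hconst]
      simp only [hnorm]
      split_ifs <;> first | contradiction | omega | simp
    | k + 3 =>
      have h := hstep (k + 2) (ih (k + 2) (by omega)) w
      rw [spherePoly, map_sub, map_mul, map_mul, aeval_X, aeval_C, ← Algebra.smul_def,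
        MonoidAlgebra.coeff_sub, Finsupp.sub_apply, MonoidAlgebra.coeff_smul, Finsupp.smul_apply,
        h, ih (k + 1) (by omega) w]
      simp only [hnorm]
      split_ifs <;> first | contradiction | omega | simp

theorem degree_monic_spherePoly {R : Type*} [CommRing R] [Nontrivial R] (q : R) (k : ℕ) :
    (spherePoly q k).degree = k ∧ (spherePoly q k).Monic := by
  induction k using Nat.strong_induction_on with
  | _ k ih =>
    have hsub {P Q : R[X]} (hP : P.degree = k ∧ P.Monic) (hQ : Q.degree < k) :
        (P - Q).degree = k ∧ (P - Q).Monic := by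
      rw [← hP.1] at hQ
      exact ⟨(degree_sub_eq_left_of_degree_lt hQ).trans hP.1, hP.2.sub_of_left hQ⟩
    match k with
    | 0 => simp [spherePoly]
    | 1 => simp [spherePoly, monic_X]
    | 2 =>
      have hlt : (C (q + 1)).degree < (2 : ℕ) := degree_C_le.trans_lt (by norm_num)
      exact hsub ⟨by rw [← pow_two, degree_X_pow], monic_X.mul monic_X⟩ hlt
    | k + 3 =>
      obtain ⟨hdeg, hmonic⟩ := ih (k + 2) (by omega)
      refine hsub ⟨?_, monic_X.mul hmonic⟩ ?_
      · rw [hmonic.degree_mul, degree_X, hdeg]; norm_cast; rw [add_comm]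
      · rw [← smul_eq_C_mul]
        refine (degree_smul_le _ _).trans_lt ?_
        rw [(ih (k + 1) (by omega)).1]
        exact_mod_cast (by omega : k + 1 < k + 3)

theorem span_spherePoly {R : Type*} [CommRing R] [Nontrivial R] (q : R) :
    Submodule.span R (Set.range (spherePoly q)) = ⊤ :=
  Sequence.span ⟨spherePoly q, fun k => (degree_monic_spherePoly q k).1⟩ fun k => by
    rw [(degree_monic_spherePoly q k).2.leadingCoeff]; exact isUnit_one

end FreeGroupSpheres

noncomputable section KestenMcKay

open Polynomial Real

theorem poissonDenom_pos {q : ℝ} (hq : 1 < q) (t : ℝ) : 0 < q ^ 2 + 1 - 2 * q * cos t := by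
  nlinarith [cos_le_one t, sq_nonneg (q - 1)]

/-- The real part of `z ^ k / (q - z ^ 2)` at the point `z = exp (i θ)` of the unit circle. -/
def poissonTerm (q : ℝ) (k : ℕ) (θ : ℝ) : ℝ :=
  (q * cos (k * θ) - cos ((k - 2) * θ)) / (q ^ 2 + 1 - 2 * q * cos (2 * θ))

theorem continuous_poissonTerm {q : ℝ} (hq : 1 < q) (k : ℕ) : Continuous (poissonTerm q k) :=
  Continuous.div (by fun_prop) (by fun_prop) fun _ => (poissonDenom_pos hq _).ne'

theorem re_circleMap_pow_div (q : ℝ) (k : ℕ) (θ : ℝ) :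
    (circleMap 0 1 θ ^ k / ((q : ℂ) - circleMap 0 1 θ ^ 2)).re = poissonTerm q k θ := by
  have hpow (m : ℕ) : circleMap 0 1 θ ^ m = Complex.exp ((m * θ : ℝ) * Complex.I) := by
    rw [circleMap_zero, Complex.ofReal_one, one_mul, ← Complex.exp_nat_mul]
    push_cast; ring_nf
  have hconj : (starRingEnd ℂ) (Complex.exp ((2 * θ : ℝ) * Complex.I)) =
      Complex.exp ((-(2 * θ) : ℝ) * Complex.I) := by
    rw [← Complex.exp_conj, map_mul, Complex.conj_ofReal, Complex.conj_I]; push_cast; ring_nf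
  have hnum : Complex.exp ((k * θ : ℝ) * Complex.I) * Complex.exp ((-(2 * θ) : ℝ) * Complex.I) =
      Complex.exp (((k - 2) * θ : ℝ) * Complex.I) := by
    rw [← Complex.exp_add]; push_cast; ring_nf
  have hden : Complex.normSq (q - Complex.exp ((2 * θ : ℝ) * Complex.I)) =
      q ^ 2 + 1 - 2 * q * cos (2 * θ) := by
    rw [Complex.normSq_sub, Complex.normSq_ofReal, Complex.normSq_eq_norm_sq,
      Complex.norm_exp_ofReal_mul_I, hconj, Complex.re_ofReal_mul, Complex.exp_ofReal_mul_I_re,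
      cos_neg]
    ring
  rw [hpow, hpow, Nat.cast_ofNat, div_eq_mul_inv, Complex.inv_def, hden, ← mul_assoc,
    Complex.re_mul_ofReal, map_sub, Complex.conj_ofReal, hconj, mul_sub, hnum, mul_comm _ (q : ℂ),
    Complex.sub_re, Complex.re_ofReal_mul, Complex.exp_ofReal_mul_I_re,
    Complex.exp_ofReal_mul_I_re, ← div_eq_mul_inv, poissonTerm]

theorem integral_poissonTerm_two_pi {q : ℝ} (hq : 1 < q) (k : ℕ) :
    ∫ θ in (0 : ℝ)..(2 * π), poissonTerm q k θ = if k = 0 then 2 * π / q else 0 := by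
  set g : ℂ → ℂ := fun z => z ^ k / ((q : ℂ) - z ^ 2) with hg
  have hdenom (z : ℂ) (hz : ‖z‖ ≤ 1) : (q : ℂ) - z ^ 2 ≠ 0 := by
    intro h
    have hnorm : |q| = ‖z‖ ^ 2 := by
      rw [← norm_pow, ← sub_eq_zero.1 h, Complex.norm_real, norm_eq_abs]
    nlinarith [le_abs_self q, norm_nonneg z]
  have hdiff : DiffContOnCl ℂ g (Metric.ball 0 |1|) := by
    refine DifferentiableOn.diffContOnCl fun z hz => DifferentiableAt.differentiableWithinAt ?_
    rw [abs_one, closure_ball _ one_ne_zero] at hz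
    have := hdenom z (by simpa using hz)
    fun_prop (disch := assumption)
  have hInt : IntervalIntegrable (fun θ => g (circleMap 0 1 θ)) volume 0 (2 * π) := by
    refine (Continuous.div ?_ ?_ fun θ => hdenom _ (by simp)).intervalIntegrable _ _ <;> fun_prop
  have hmean : ∫ θ in (0 : ℝ)..(2 * π), g (circleMap 0 1 θ) = ((2 * π : ℝ) : ℂ) * g 0 := by
    rw [← hdiff.circleAverage, circleAverage, Complex.real_smul, ← mul_assoc, ← Complex.ofReal_mul,
      mul_inv_cancel₀ two_pi_pos.ne', Complex.ofReal_one, one_mul]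
  calc _ = ∫ θ in (0 : ℝ)..(2 * π), Complex.reCLM (g (circleMap 0 1 θ)) := by
        simp_rw [← re_circleMap_pow_div]; rfl
    _ = (((2 * π : ℝ) : ℂ) * g 0).re := by
        rw [ContinuousLinearMap.intervalIntegral_comp_comm _ hInt, hmean, Complex.reCLM_apply]
    _ = if k = 0 then 2 * π / q else 0 := by
        have hzero : g 0 = ((if k = 0 then q⁻¹ else 0 : ℝ) : ℂ) := by
          rw [hg]; split_ifs with hk <;> simp [hk]
        rw [hzero, Complex.re_ofReal_mul, Complex.ofReal_re, mul_ite, mul_zero, div_eq_mul_inv]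

theorem integral_eq_two_mul_of_reflection {f : ℝ → ℝ} {a : ℝ}
    (hf : IntervalIntegrable f volume 0 a) (hsymm : ∀ x, f (2 * a - x) = f x) :
    ∫ x in (0 : ℝ)..(2 * a), f x = 2 * ∫ x in (0 : ℝ)..a, f x := by
  have hreflect : ∫ x in a..(2 * a), f x = ∫ x in (0 : ℝ)..a, f x := by
    have h := intervalIntegral.integral_comp_sub_left (a := 0) (b := a) f (2 * a)
    simp only [hsymm] at h
    rw [h]; ring_nf
  have hf' : IntervalIntegrable f volume a (2 * a) := by
    have h := (hf.comp_sub_left (2 * a)).symm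
    simp only [hsymm] at h
    convert h using 1 <;> ring
  rw [← intervalIntegral.integral_add_adjacent_intervals hf hf', hreflect, two_mul]

theorem integral_poissonTerm {q : ℝ} (hq : 1 < q) (k : ℕ) :
    ∫ θ in (0 : ℝ)..π, poissonTerm q k θ = if k = 0 then π / q else 0 := by
  have hcos (m : ℤ) (x : ℝ) : cos (m * (2 * π - x)) = cos (m * x) := by
    rw [mul_sub, cos_int_mul_two_pi_sub]
  have hsymm (x : ℝ) : poissonTerm q k (2 * π - x) = poissonTerm q k x := by
    have hk := hcos k x
    have hk2 := hcos (k - 2) x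
    have h2 := hcos 2 x
    push_cast at hk hk2 h2
    rw [poissonTerm, poissonTerm, hk, hk2, h2]
  have hhalf := integral_eq_two_mul_of_reflection
    ((continuous_poissonTerm hq k).intervalIntegrable 0 π) hsymm
  rw [integral_poissonTerm_two_pi hq] at hhalf
  split_ifs at hhalf ⊢ with hk <;> linear_combination -hhalf / 2

theorem two_mul_cos_mul_sin (θ m : ℝ) :
    2 * cos θ * sin (m * θ) = sin ((m + 1) * θ) + sin ((m - 1) * θ) := by
  rw [add_mul, sub_mul, one_mul, sin_add, sin_sub]; ring

theorem sin_mul_eval_spherePoly {q : ℝ} (hq : 0 < q) (θ : ℝ) (k : ℕ) :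
    sin θ * (spherePoly q (k + 1)).eval (2 * √q * cos θ) =
      √q ^ (k + 1) * (sin ((k + 2) * θ) - q⁻¹ * sin (k * θ)) := by
  have hs : √q ^ 2 = q := sq_sqrt hq.le
  have hrec := two_mul_cos_mul_sin θ
  induction k using Nat.twoStepInduction with
  | zero => simp [spherePoly, sin_two_mul]; ring
  | one =>
    have h1 := hrec 1
    have h2 := hrec 2
    have hinv : q * q⁻¹ = 1 := mul_inv_cancel₀ hq.ne'
    norm_num [spherePoly] at h1 h2 ⊢
    linear_combination √q ^ 2 * h2 + √q ^ 2 * 2 * cos θ * h1 +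
      (sin θ + sin θ * q⁻¹) * hs + sin θ * hinv
  | more k ih₀ ih₁ =>
    have h1 := hrec (k + 1)
    have h3 := hrec (k + 3)
    rw [spherePoly, eval_sub, eval_mul, eval_X, eval_mul, eval_C]
    push_cast at ih₁ ⊢
    linear_combination (norm := ring_nf) 2 * √q * cos θ * ih₁ - q * ih₀ + √q ^ (k + 3) * h3 -
      √q ^ (k + 3) * q⁻¹ * h1 + √q ^ (k + 1) * (sin ((k + 2) * θ) - q⁻¹ * sin (k * θ)) * hs

theorem sin_sq_spherePoly_zero_div {q : ℝ} (hq : 1 < q) (θ : ℝ) :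
    sin θ * (sin θ * (spherePoly q 0).eval (2 * √q * cos θ)) / (q ^ 2 + 1 - 2 * q * cos (2 * θ)) =
      (2 * (q + 1))⁻¹ * (poissonTerm q 0 θ - poissonTerm q 2 θ) := by
  have := (poissonDenom_pos hq (2 * θ)).ne'
  have hq1 : q + 1 ≠ 0 := by linarith
  have hsin : sin θ * sin θ = (1 - cos (2 * θ)) / 2 := by rw [cos_two_mul, ← pow_two, sin_sq]; ring
  rw [spherePoly, eval_one, mul_one, hsin, poissonTerm, poissonTerm]
  norm_num
  field_simp
  ring

theorem sin_sq_spherePoly_succ_div {q : ℝ} (hq : 1 < q) (k : ℕ) (θ : ℝ) :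
    sin θ * (sin θ * (spherePoly q (k + 1)).eval (2 * √q * cos θ)) /
        (q ^ 2 + 1 - 2 * q * cos (2 * θ)) =
      √q ^ (k + 1) / (2 * q) * (poissonTerm q (k + 1) θ - poissonTerm q (k + 3) θ) := by
  have hden := (poissonDenom_pos hq (2 * θ)).ne'
  have hq0 : q ≠ 0 := by linarith
  have hprod (m : ℝ) : sin θ * sin (m * θ) = (cos ((m - 1) * θ) - cos ((m + 1) * θ)) / 2 := by
    rw [add_mul, sub_mul, one_mul, cos_add, cos_sub]; ring
  have hk := hprod k
  have hk2 := hprod (k + 2)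
  rw [sin_mul_eval_spherePoly (by linarith), mul_left_comm, mul_sub, mul_left_comm _ q⁻¹, hk, hk2,
    poissonTerm, poissonTerm]
  push_cast
  field_simp
  ring_nf

theorem integral_sin_sq_spherePoly_div {q : ℝ} (hq : 1 < q) (k : ℕ) :
    ∫ θ in (0 : ℝ)..π, sin θ * (sin θ * (spherePoly q k).eval (2 * √q * cos θ)) /
        (q ^ 2 + 1 - 2 * q * cos (2 * θ)) = if k = 0 then π / (2 * q * (q + 1)) else 0 := by
  have hInt (j : ℕ) := (continuous_poissonTerm hq j).intervalIntegrable (μ := volume) 0 π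
  cases k with
  | zero =>
    simp_rw [sin_sq_spherePoly_zero_div hq]
    rw [intervalIntegral.integral_const_mul, intervalIntegral.integral_sub (hInt _) (hInt _),
      integral_poissonTerm hq, integral_poissonTerm hq, if_pos rfl, if_neg two_ne_zero]
    simp only [if_true]
    field_simp
    ring
  | succ k =>
    simp_rw [sin_sq_spherePoly_succ_div hq]
    rw [intervalIntegral.integral_const_mul, intervalIntegral.integral_sub (hInt _) (hInt _),
      integral_poissonTerm hq, integral_poissonTerm hq]
    simp

theorem integral_symm_eq_integral_mul_cos {R : ℝ} (hR : 0 ≤ R) (f : ℝ → ℝ) :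
    ∫ x in -R..R, f x = ∫ θ in (0 : ℝ)..π, R * sin θ * f (R * cos θ) := by
  have hsubst := intervalIntegral.integral_comp_mul_deriv_of_deriv_nonpos (a := 0) (b := π)
    (f := fun θ => R * cos θ) (f' := fun θ => R * -sin θ) (g := f) (by fun_prop)
    (fun x _ => (hasDerivAt_cos x).const_mul R) fun x hx => by
      rw [min_eq_left pi_pos.le, max_eq_right pi_pos.le] at hx
      exact mul_nonpos_of_nonneg_of_nonpos hR (neg_nonpos.2 (sin_pos_of_mem_Ioo hx).le)
  simp only [cos_zero, cos_pi, mul_one, mul_neg] at hsubst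
  rw [intervalIntegral.integral_symm, ← hsubst, ← intervalIntegral.integral_neg]
  congr 1 with θ
  simp [mul_comm, mul_left_comm]

theorem one_le_kmDensity_denom {d : ℕ} (hd : 2 ≤ d) {x : ℝ}
    (hx : x ^ 2 ≤ 4 * (2 * (d : ℝ) - 1)) : 1 ≤ (2 * (d : ℝ)) ^ 2 - x ^ 2 := by
  have hd' : (2 : ℝ) ≤ d := by exact_mod_cast hd
  nlinarith

theorem kmDensity_nonneg {d : ℕ} (hd : 2 ≤ d) (x : ℝ) : 0 ≤ kmDensity d x := by
  unfold kmDensity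
  split_ifs with hx
  · have := one_le_kmDensity_denom hd hx
    positivity
  · exact le_rfl

theorem kmDensity_le {d : ℕ} (hd : 2 ≤ d) (x : ℝ) :
    kmDensity d x ≤ 2 * d * √(4 * (2 * d - 1)) := by
  unfold kmDensity
  split_ifs with hx
  · have hden : 1 ≤ 2 * π * ((2 * (d : ℝ)) ^ 2 - x ^ 2) := by
      nlinarith [pi_gt_three, one_le_kmDensity_denom hd hx]
    refine (div_le_self (by positivity) hden).trans ?_
    gcongr
    linarith [sq_nonneg x]
  · positivity

theorem measurable_kmDensity (d : ℕ) : Measurable (kmDensity d) :=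
  Measurable.ite (measurableSet_le (by fun_prop) (by fun_prop)) (by fun_prop) (by fun_prop)

theorem kmDensity_eq_zero {d : ℕ} (hd : 2 ≤ d) {x : ℝ} (hx : 2 * √(2 * d - 1) < |x|) :
    kmDensity d x = 0 := by
  have hd' : (2 : ℝ) ≤ d := by exact_mod_cast hd
  refine if_neg (not_le.2 ?_)
  calc 4 * (2 * (d : ℝ) - 1) = (2 * √(2 * d - 1)) ^ 2 := by
        rw [mul_pow, sq_sqrt (by linarith)]; ring
    _ < |x| ^ 2 := by gcongr
    _ = x ^ 2 := sq_abs x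

theorem sin_mul_kmDensity_mul_cos {d : ℕ} (hd : 2 ≤ d) {θ : ℝ} (hθ : θ ∈ Set.Icc 0 π) :
    2 * √(2 * d - 1) * sin θ * kmDensity d (2 * √(2 * d - 1) * cos θ) =
      2 * d * (4 * (2 * d - 1)) / (2 * π) * (sin θ * sin θ /
        ((2 * (d : ℝ) - 1) ^ 2 + 1 - 2 * (2 * d - 1) * cos (2 * θ))) := by
  have hd' : (2 : ℝ) ≤ d := by exact_mod_cast hd
  set R := 2 * √(2 * (d : ℝ) - 1) with hR
  have hR2 : 4 * (2 * (d : ℝ) - 1) = R ^ 2 := by rw [hR, mul_pow, sq_sqrt (by linarith)]; ring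
  have hsupp : (R * cos θ) ^ 2 ≤ R ^ 2 := by
    rw [mul_pow]; exact mul_le_of_le_one_right (sq_nonneg R) (cos_sq_le_one θ)
  have hsqrt : √(R ^ 2 - (R * cos θ) ^ 2) = R * sin θ := by
    rw [← sqrt_sq (mul_nonneg (by positivity : 0 ≤ R) (sin_nonneg_of_mem_Icc hθ))]
    congr 1
    linear_combination -R ^ 2 * sin_sq_add_cos_sq θ
  have hden : (2 * (d : ℝ) - 1) ^ 2 + 1 - 2 * (2 * d - 1) * cos (2 * θ) =
      (2 * (d : ℝ)) ^ 2 - (R * cos θ) ^ 2 := by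
    rw [cos_two_mul]; linear_combination -cos θ ^ 2 * hR2
  have := one_le_kmDensity_denom hd (hsupp.trans hR2.ge)
  rw [kmDensity, hR2, if_pos hsupp, hsqrt, hden]
  field_simp

theorem integral_kestenMcKay {d : ℕ} (hd : 2 ≤ d) (g : ℝ → ℝ) :
    ∫ x, g x ∂(kestenMcKay d) =
      ∫ x in -(2 * √(2 * d - 1))..2 * √(2 * d - 1), kmDensity d x * g x := by
  have hR : 0 ≤ 2 * √(2 * (d : ℝ) - 1) := by positivity
  rw [kestenMcKay, integral_withDensity_eq_integral_toReal_smul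
    (measurable_kmDensity d).ennreal_ofReal (by simp)]
  simp_rw [ENNReal.toReal_ofReal (kmDensity_nonneg hd _), smul_eq_mul]
  rw [intervalIntegral.integral_of_le (by linarith), ← integral_Icc_eq_integral_Ioc,
    setIntegral_eq_integral_of_forall_compl_eq_zero fun x hx => ?_]
  rw [kmDensity_eq_zero hd (not_le.1 fun h => hx (abs_le.1 h)), zero_mul]

theorem integral_spherePoly_kestenMcKay {d : ℕ} (hd : 2 ≤ d) (k : ℕ) :
    ∫ x, (spherePoly (2 * (d : ℝ) - 1) k).eval x ∂(kestenMcKay d) = if k = 0 then 1 else 0 := by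
  have hd' : (2 : ℝ) ≤ d := by exact_mod_cast hd
  set q := 2 * (d : ℝ) - 1
  have hqd : 2 * (d : ℝ) = q + 1 := by ring
  calc _ = ∫ θ in (0 : ℝ)..π, 2 * d * (4 * q) / (2 * π) *
        (sin θ * (sin θ * (spherePoly q k).eval (2 * √q * cos θ)) /
          (q ^ 2 + 1 - 2 * q * cos (2 * θ))) := by
        rw [integral_kestenMcKay hd, integral_symm_eq_integral_mul_cos (by positivity)]
        refine intervalIntegral.integral_congr fun θ hθ => ?_
        rw [Set.uIcc_of_le pi_pos.le] at hθ
        rw [← mul_assoc, sin_mul_kmDensity_mul_cos hd hθ]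
        ring
    _ = if k = 0 then 1 else 0 := by
        rw [intervalIntegral.integral_const_mul, integral_sin_sq_spherePoly_div (by linarith), hqd]
        have hq0 : q ≠ 0 := by linarith
        have hq1 : q + 1 ≠ 0 := by linarith
        split_ifs
        · field_simp; norm_num
        · rw [mul_zero]

theorem isProbabilityMeasure_kestenMcKay {d : ℕ} (hd : 2 ≤ d) :
    IsProbabilityMeasure (kestenMcKay d) := by
  have h := integral_spherePoly_kestenMcKay hd 0
  simp only [spherePoly, eval_one, integral_const, smul_eq_mul, mul_one, if_true,
    measureReal_def] at h
  exact ⟨(ENNReal.toReal_eq_one_iff _).1 h⟩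

theorem ae_kestenMcKay_abs_le {d : ℕ} (hd : 2 ≤ d) : ∀ᵐ x ∂(kestenMcKay d), |x| ≤ 2 * (d : ℝ) := by
  have hd' : (2 : ℝ) ≤ d := by exact_mod_cast hd
  have hR : 2 * √(2 * (d : ℝ) - 1) ≤ 2 * d := by
    gcongr
    exact (sqrt_le_left (by positivity)).2 (by nlinarith)
  rw [kestenMcKay, ae_withDensity_iff (measurable_kmDensity d).ennreal_ofReal]
  refine Filter.Eventually.of_forall fun x hx => ?_
  contrapose! hx
  rw [kmDensity_eq_zero hd (hR.trans_lt hx), ENNReal.ofReal_zero]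

theorem kestenMcKay_real_Icc_le {d : ℕ} (hd : 2 ≤ d) {a b : ℝ} (hab : a ≤ b) :
    (kestenMcKay d).real (Set.Icc a b) ≤ 2 * d * √(4 * (2 * d - 1)) * (b - a) := by
  refine ENNReal.toReal_le_of_le_ofReal (mul_nonneg (by positivity) (by linarith)) ?_
  rw [kestenMcKay, withDensity_apply _ measurableSet_Icc]
  calc _ ≤ ∫⁻ _ in Set.Icc a b, ENNReal.ofReal (2 * d * √(4 * (2 * d - 1))) :=
        lintegral_mono fun x => ENNReal.ofReal_le_ofReal (kmDensity_le hd x)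
    _ = _ := by rw [setLIntegral_const, volume_Icc, ← ENNReal.ofReal_mul (by positivity)]

end KestenMcKay

noncomputable section DiscrepancyFromMoments

open Polynomial

/-- The continuous piecewise linear function with value `1` on `(-∞, s]` and `0` on `[s + h, ∞)`. -/
def ramp (h s x : ℝ) : ℝ := max 0 (min 1 ((s + h - x) / h))

theorem continuous_ramp (h s : ℝ) : Continuous (ramp h s) := by unfold ramp; fun_prop

theorem ramp_nonneg (h s x : ℝ) : 0 ≤ ramp h s x := le_max_left _ _

theorem ramp_le_one (h s x : ℝ) : ramp h s x ≤ 1 := max_le zero_le_one (min_le_left _ _)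

theorem ramp_eq_one {h s x : ℝ} (hh : 0 < h) (hx : x ≤ s) : ramp h s x = 1 := by
  have : 1 ≤ (s + h - x) / h := by rw [le_div_iff₀ hh]; linarith
  simp [ramp, this]

theorem ramp_eq_zero {h s x : ℝ} (hh : 0 < h) (hx : s + h ≤ x) : ramp h s x = 0 := by
  have : (s + h - x) / h ≤ 0 := div_nonpos_of_nonpos_of_nonneg (by linarith) hh.le
  simp [ramp, this]

theorem abs_ramp_sub_ramp_le {h : ℝ} (hh : 0 < h) (s t x : ℝ) :
    |ramp h s x - ramp h t x| ≤ |s - t| / h := by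
  have hmax := abs_max_sub_max_le_max 0 (min 1 ((s + h - x) / h)) 0 (min 1 ((t + h - x) / h))
  have hmin := abs_min_sub_min_le_max 1 ((s + h - x) / h) 1 ((t + h - x) / h)
  have hpos : 0 ≤ |s - t| / h := by positivity
  have hdiff : |(s + h - x) / h - (t + h - x) / h| = |s - t| / h := by
    rw [← sub_div, abs_div, abs_of_pos hh]; ring_nf
  refine hmax.trans (max_le ?_ (hmin.trans (max_le ?_ hdiff.le))) <;> simpa using hpos

theorem ramp_clamp {h R x : ℝ} (hh : 0 < h) (hx : |x| ≤ R) (s : ℝ) :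
    ramp h (max (-R - h) (min R s)) x = ramp h s x := by
  obtain ⟨hlow, hhigh⟩ := abs_le.1 hx
  rcases le_total R s with hs | hs
  · rw [min_eq_left hs, max_eq_right (by linarith), ramp_eq_one hh hhigh,
      ramp_eq_one hh (hhigh.trans hs)]
  rw [min_eq_right hs]
  rcases le_total s (-R - h) with hs' | hs'
  · rw [max_eq_left hs', ramp_eq_zero hh (by linarith), ramp_eq_zero hh (by linarith)]
  · rw [max_eq_right hs']

theorem exists_finset_polynomial_near_ramp {h η : ℝ} (R : ℝ) (hh : 0 < h) (hη : 0 < η) :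
    ∃ T : Finset ℝ[X], ∀ s, ∃ P ∈ T, ∀ x, |x| ≤ R → |P.eval x - ramp h s x| ≤ 2 * η := by
  obtain ⟨net, -, hfin, hnet⟩ := (isCompact_Icc (a := -|R| - h) (b := |R|)).finite_cover_balls
    (mul_pos hη hh)
  choose P hP using fun s => exists_polynomial_near_of_continuousOn (-R) R (ramp h s)
    (continuous_ramp h s).continuousOn η hη
  classical
  refine ⟨hfin.toFinset.image P, fun s => ?_⟩
  obtain ⟨t, ht, hst⟩ := Set.mem_iUnion₂.1 (@hnet (max (-|R| - h) (min |R| s))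
    ⟨le_max_left _ _, max_le (by linarith [abs_nonneg R]) (min_le_left _ _)⟩)
  refine ⟨P t, Finset.mem_image_of_mem P (hfin.mem_toFinset.2 ht), fun x hx => ?_⟩
  have hclamp : |ramp h t x - ramp h s x| ≤ η := by
    rw [← ramp_clamp hh (hx.trans (le_abs_self R)) s, abs_sub_comm]
    exact (abs_ramp_sub_ramp_le hh _ _ _).trans ((div_le_iff₀ hh).2 (Metric.mem_ball.1 hst).le)
  linarith [abs_sub_le ((P t).eval x) (ramp h t x) (ramp h s x), hP t x (abs_le.1 hx)]

theorem integrable_of_ae_abs_le {μ : Measure ℝ} [IsFiniteMeasure μ] {R : ℝ}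
    (hμ : ∀ᵐ x ∂μ, |x| ≤ R) {f : ℝ → ℝ} (hf : Continuous f) : Integrable f μ := by
  obtain ⟨M, hM⟩ := (isCompact_Icc (a := -R) (b := R)).exists_bound_of_continuousOn hf.continuousOn
  exact Integrable.of_bound hf.aestronglyMeasurable M
    (hμ.mono fun x hx => hM x (abs_le.1 hx))

theorem abs_integral_sub_integral_le {μ : Measure ℝ} [IsProbabilityMeasure μ] {R η : ℝ}
    (hμ : ∀ᵐ x ∂μ, |x| ≤ R) {f g : ℝ → ℝ} (hf : Continuous f) (hg : Continuous g)
    (hfg : ∀ x, |x| ≤ R → |f x - g x| ≤ η) : |∫ x, f x ∂μ - ∫ x, g x ∂μ| ≤ η := by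
  rw [← integral_sub (integrable_of_ae_abs_le hμ hf) (integrable_of_ae_abs_le hμ hg)]
  simpa using norm_integral_le_of_norm_le_const (μ := μ) (f := fun x => f x - g x) (hμ.mono hfg)

variable {μ ν : Measure ℝ} [IsProbabilityMeasure μ]

theorem integrable_ramp (h s : ℝ) : Integrable (ramp h s) μ :=
  Integrable.of_bound (continuous_ramp h s).aestronglyMeasurable 1 <| .of_forall fun x => by
    rw [Real.norm_of_nonneg (ramp_nonneg _ _ _)]; exact ramp_le_one _ _ _

theorem measureReal_Iic_le_integral_ramp {h : ℝ} (hh : 0 < h) (s : ℝ) :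
    μ.real (Set.Iic s) ≤ ∫ x, ramp h s x ∂μ := by
  rw [← integral_indicator_one measurableSet_Iic]
  refine integral_mono ((integrable_const 1).indicator measurableSet_Iic) (integrable_ramp h s) ?_
  intro x
  by_cases hx : x ≤ s
  · simp [hx, ramp_eq_one hh hx]
  · simp [hx, ramp_nonneg]

theorem integral_ramp_le_measureReal_Iio {h : ℝ} (hh : 0 < h) (s : ℝ) :
    ∫ x, ramp h s x ∂μ ≤ μ.real (Set.Iio (s + h)) := by
  rw [← integral_indicator_one measurableSet_Iio]
  refine integral_mono (integrable_ramp h s) ((integrable_const 1).indicator measurableSet_Iio) ?_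
  intro x
  by_cases hx : x < s + h
  · simp [hx, ramp_le_one]
  · simp [hx, ramp_eq_zero hh (not_lt.1 hx)]

theorem cdf_le_of_integral_ramp_close [IsProbabilityMeasure ν] {h c K : ℝ} (hh : 0 < h)
    (hν : ∀ a b, a ≤ b → ν.real (Set.Icc a b) ≤ K * (b - a))
    (hclose : ∀ s, |∫ x, ramp h s x ∂μ - ∫ x, ramp h s x ∂ν| ≤ c) (t : ℝ) :
    μ.real (Set.Iic t) ≤ ν.real (Set.Iio t) + (K * h + c) ∧
      ν.real (Set.Iic t) ≤ μ.real (Set.Iio t) + (K * h + c) := by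
  constructor
  · have hsplit : ν.real (Set.Iio (t + h)) ≤ ν.real (Set.Iio t) + ν.real (Set.Icc t (t + h)) :=
      (measureReal_mono fun x hx => (lt_or_ge x t).imp_right fun h' => ⟨h', le_of_lt hx⟩).trans
        (measureReal_union_le _ _)
    linarith [measureReal_Iic_le_integral_ramp (μ := μ) hh t, (abs_le.1 (hclose t)).2,
      integral_ramp_le_measureReal_Iio (μ := ν) hh t, hν t (t + h) (by linarith)]
  · have hsplit : ν.real (Set.Iic t) ≤ ν.real (Set.Iic (t - h)) + ν.real (Set.Icc (t - h) t) :=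
      (measureReal_mono fun x hx => (le_total x (t - h)).imp_right fun h' => ⟨h', hx⟩).trans
        (measureReal_union_le _ _)
    have hIio := integral_ramp_le_measureReal_Iio (μ := μ) hh (t - h)
    rw [sub_add_cancel] at hIio
    linarith [measureReal_Iic_le_integral_ramp (μ := ν) hh (t - h), (abs_le.1 (hclose (t - h))).1,
      hν (t - h) t (by linarith)]

omit [IsProbabilityMeasure μ] in
theorem measureReal_Icc_eq_sub [IsFiniteMeasure μ] {a b : ℝ} (hab : a ≤ b) :
    μ.real (Set.Icc a b) = μ.real (Set.Iic b) - μ.real (Set.Iio a) := by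
  have hdisj : Disjoint (Set.Iio a) (Set.Icc a b) :=
    Set.disjoint_left.2 fun x hx hx' => hx'.1.not_gt hx
  rw [← Set.Iio_union_Icc_eq_Iic hab, measureReal_union hdisj measurableSet_Icc,
    add_sub_cancel_left]

theorem discrepancy_le_of_cdf_le [IsProbabilityMeasure ν] {ρ : ℝ} (hρ : 0 ≤ ρ)
    (hcdf : ∀ t, μ.real (Set.Iic t) ≤ ν.real (Set.Iio t) + ρ ∧
      ν.real (Set.Iic t) ≤ μ.real (Set.Iio t) + ρ) : discrepancy μ ν ≤ 2 * ρ := by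
  refine Real.sSup_le ?_ (by positivity)
  rintro r ⟨a, b, hab, rfl⟩
  have hmono (κ : Measure ℝ) [IsProbabilityMeasure κ] (t : ℝ) :
      κ.real (Set.Iio t) ≤ κ.real (Set.Iic t) := measureReal_mono Set.Iio_subset_Iic_self
  rw [← measureReal_def, ← measureReal_def, measureReal_Icc_eq_sub hab, measureReal_Icc_eq_sub hab,
    abs_le]
  constructor <;>
    linarith [hcdf a, hcdf b, hmono μ a, hmono μ b, hmono ν a, hmono ν b]

omit [IsProbabilityMeasure μ] in
theorem exists_moment_test_for_discrepancy [IsProbabilityMeasure ν] {R K ε : ℝ} (hε : 0 < ε)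
    (hνR : ∀ᵐ x ∂ν, |x| ≤ R) (hν : ∀ a b, a ≤ b → ν.real (Set.Icc a b) ≤ K * (b - a)) :
    ∃ (T : Finset ℝ[X]) (δ : ℝ), 0 < δ ∧ ∀ μ : Measure ℝ, IsProbabilityMeasure μ →
      (∀ᵐ x ∂μ, |x| ≤ R) →
      (∀ P ∈ T, |∫ x, P.eval x ∂μ - ∫ x, P.eval x ∂ν| ≤ δ) → discrepancy μ ν ≤ ε := by
  have hK : 0 ≤ K := by simpa using measureReal_nonneg.trans (hν 0 1 zero_le_one)
  set h := ε / (4 * (K + 1)) with hh_def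
  set η := ε / 20 with hη_def
  have hh : 0 < h := by positivity
  have hη : 0 < η := by positivity
  have hKh : K * h ≤ ε / 4 := by
    rw [hh_def, mul_div_assoc', div_le_div_iff₀ (by positivity) (by positivity)]
    nlinarith
  obtain ⟨T, hT⟩ := exists_finset_polynomial_near_ramp R hh hη
  refine ⟨T, η, hη, fun μ _ hμR hmoments => ?_⟩
  have hclose (s : ℝ) : |∫ x, ramp h s x ∂μ - ∫ x, ramp h s x ∂ν| ≤ 5 * η := by
    obtain ⟨P, hPT, hP⟩ := hT s
    have hPμ := abs_le.1 (abs_integral_sub_integral_le hμR P.continuous (continuous_ramp h s) hP)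
    have hPν := abs_le.1 (abs_integral_sub_integral_le hνR P.continuous (continuous_ramp h s) hP)
    have hPP := abs_le.1 (hmoments P hPT)
    exact abs_le.2 ⟨by linarith, by linarith⟩
  refine (discrepancy_le_of_cdf_le (by positivity)
    (cdf_le_of_integral_ramp_close hh hν hclose)).trans ?_
  linarith

end DiscrepancyFromMoments

section TransvectionsInSL

open Matrix Matrix.SpecialLinearGroup
open scoped commutatorElement

variable {ι F : Type*} [Fintype ι] [DecidableEq ι] [Field F]

theorem commutator_transvection {i j k : ι} (hij : i ≠ j) (hjk : j ≠ k) (hik : i ≠ k) (a b : F) :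
    ⁅transvection hij a, transvection hjk b⁆ = transvection hik (a * b) := by
  rw [commutatorElement_def, transvection_inv, transvection_inv]
  apply Subtype.ext
  simp only [coe_mul, transvection_coe, mul_add, add_mul, mul_one, one_mul, add_zero,
    single_mul_single_same, single_mul_single_of_ne _ _ _ _ hij.symm,
    single_mul_single_of_ne _ _ _ _ hik.symm, single_mul_single_of_ne _ _ _ _ hjk.symm,
    ← single_neg, mul_neg, neg_mul]
  abel

theorem diag2n_eq_mul_transvection {i j : ι} (hij : i ≠ j) {c : F} (hc : c ≠ 0) :
    diag2n hij c hc = transvection hij c * transvection hij.symm (-c⁻¹) * transvection hij c *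
      transvection hij (-1) * transvection hij.symm 1 * transvection hij (-1) := by
  apply Subtype.ext
  simp only [coe_mul, transvection_coe, diag2n_coe, mul_add, add_mul, mul_one, one_mul,
    add_zero, single_mul_single_same, single_mul_single_of_ne _ _ _ _ hij,
    single_mul_single_of_ne _ _ _ _ hij.symm, mul_neg, neg_mul, inv_mul_cancel₀ hc,
    mul_inv_cancel₀ hc]
  ext a b
  simp only [Matrix.add_apply, single_apply, diagonal_apply, Matrix.one_apply]
  split_ifs <;> first | (exfalso; grind) | (field_simp; ring)

variable {H : Type*} [Group H]

theorem hom_eq_one_of_forall_transvection [Nontrivial ι] {f : SpecialLinearGroup ι F →* H}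
    (hf : ∀ (i j : ι) (hij : i ≠ j) (c : F), f (transvection hij c) = 1) : f = 1 := by
  ext M
  refine diagonal_transvection_induction' (f · = 1) M (fun i j hij c hc => ?_) hf
    fun A B hA hB => ?_
  · simp [diag2n_eq_mul_transvection, hf]
  · simp [hA, hB]

theorem hom_eq_one_of_row_transvection (hι : 2 < Fintype.card ι) {f : SpecialLinearGroup ι F →* H}
    (i₀ : ι) (hf : ∀ (j : ι) (hj : i₀ ≠ j) (c : F), f (transvection hj c) = 1) : f = 1 := by
  have hnontrivial : Nontrivial ι := Fintype.one_lt_card_iff_nontrivial.1 (by omega)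
  have hcol (i j : ι) (hij : i ≠ j) (hj : i₀ ≠ j) (c : F) : f (transvection hij c) = 1 := by
    rcases eq_or_ne i i₀ with rfl | hi
    · exact hf j hij c
    · rw [← one_mul c, ← commutator_transvection hi hj, map_commutatorElement, hf,
        commutatorElement_one_right]
  refine hom_eq_one_of_forall_transvection fun i j hij c => ?_
  rcases eq_or_ne i₀ j with rfl | hj
  · obtain ⟨k, hki, hkj⟩ : ∃ k, k ≠ i ∧ k ≠ i₀ := by
      simpa using Finset.exists_mem_notMem_of_card_lt_card
        (Finset.card_le_two.trans_lt hι : ({i, i₀} : Finset ι).card < Finset.univ.card)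
    rw [← mul_one c, ← commutator_transvection hki.symm hkj, map_commutatorElement,
      hcol i k hki.symm hkj.symm, commutatorElement_one_left]
  · exact hcol i j hij hj c

/-- The unipotent element `1 + u ⊗ f` attached to a vector `u` and a covector `f` killing it. -/
def rankOneUnipotent (u f : ι → F) (h : f ⬝ᵥ u = 0) : SpecialLinearGroup ι F :=
  ⟨1 + vecMulVec u f, by
    rw [vecMulVec_eq Unit, det_one_add_replicateCol_mul_replicateRow, h, add_zero]⟩

theorem coe_rankOneUnipotent (u f : ι → F) (h : f ⬝ᵥ u = 0) :
    (rankOneUnipotent u f h : Matrix ι ι F) = 1 + vecMulVec u f := rfl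

theorem isConj_rankOneUnipotent {u f f' x : ι → F} (h : f ⬝ᵥ u = 0) (h' : f' ⬝ᵥ u = 0)
    (hx : f ⬝ᵥ x = 1) (hx' : f' ⬝ᵥ x = 1) :
    IsConj (rankOneUnipotent u f h) (rankOneUnipotent u f' h') := by
  refine isConj_iff.2 ⟨rankOneUnipotent x (f - f') (by simp [sub_dotProduct, hx, hx']), ?_⟩
  rw [mul_inv_eq_iff_eq_mul]
  apply Subtype.ext
  simp only [coe_mul, coe_rankOneUnipotent, mul_add, add_mul, one_mul, mul_one,
    vecMulVec_mul_vecMulVec, sub_dotProduct, h, h', hx', sub_zero, zero_smul, one_smul,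
    vecMulVec_zero]
  simp only [vecMulVec_sub]
  abel

end TransvectionsInSL

section RowUnipotents

open Matrix Matrix.SpecialLinearGroup

variable {m : ℕ} {F : Type*} [Field F]

theorem vecCons_zero_dotProduct (a : Fin m → F) (t : F) (x : Fin m → F) :
    vecCons 0 a ⬝ᵥ vecCons t x = a ⬝ᵥ x := by
  simp

/-- The abelian subgroup of `SL` consisting of the matrices which differ from the identity only in
the last `m` entries of their first row. -/
def rowUnipotent : Multiplicative (Fin m → F) →* SpecialLinearGroup (Fin (m + 1)) F where
  toFun a := rankOneUnipotent (vecCons 1 0) (vecCons 0 a.toAdd) (by simp)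
  map_one' := by
    apply Subtype.ext
    simp [coe_rankOneUnipotent]
  map_mul' a b := by
    apply Subtype.ext
    simp only [coe_mul, coe_rankOneUnipotent, toAdd_mul, mul_add, add_mul, mul_one, one_mul,
      vecMulVec_mul_vecMulVec, vecCons_zero_dotProduct, dotProduct_zero, zero_smul, vecMulVec_zero]
    rw [← zero_add (0 : F), ← cons_add_cons, vecMulVec_add, zero_add]
    abel

theorem coe_rowUnipotent (a : Fin m → F) :
    (rowUnipotent (.ofAdd a) : Matrix (Fin (m + 1)) (Fin (m + 1)) F) =
      1 + vecMulVec (vecCons 1 0) (vecCons 0 a) := rfl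

theorem rowUnipotent_single (j : Fin m) (c : F) :
    rowUnipotent (.ofAdd (Pi.single j c)) = transvection (Fin.succ_ne_zero j).symm c := by
  apply Subtype.ext
  ext a b
  refine Fin.cases ?_ (fun a => ?_) a <;> refine Fin.cases ?_ (fun b => ?_) b <;>
    simp [coe_rowUnipotent, transvection_coe, single_apply, Pi.single_apply, eq_comm]

theorem isConj_rowUnipotent_of_dotProduct_eq_one {a b x : Fin m → F} (ha : a ⬝ᵥ x = 1)
    (hb : b ⬝ᵥ x = 1) : IsConj (rowUnipotent (.ofAdd a)) (rowUnipotent (.ofAdd b)) :=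
  isConj_rankOneUnipotent (x := vecCons 0 x) (by simp) (by simp) (by simpa using ha)
    (by simpa using hb)

theorem isConj_rowUnipotent_single [Nontrivial (Fin m)] {a : Fin m → F} (ha : a ≠ 0) (j : Fin m) :
    IsConj (rowUnipotent (.ofAdd a)) (rowUnipotent (.ofAdd (Pi.single j 1))) := by
  have hoff {a : Fin m → F} {j l : Fin m} (hlj : l ≠ j) (hl : a l ≠ 0) :
      IsConj (rowUnipotent (.ofAdd a)) (rowUnipotent (.ofAdd (Pi.single j 1))) := by
    refine isConj_rowUnipotent_of_dotProduct_eq_one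
      (x := Pi.single j 1 + Pi.single l ((1 - a j) / a l)) ?_ ?_
    · simp [dotProduct_add, mul_div_cancel₀ _ hl]
    · simp [dotProduct_add, hlj]
  obtain ⟨l, hl⟩ := Function.ne_iff.1 ha
  rcases eq_or_ne l j with rfl | hlj
  · obtain ⟨j', hj'⟩ := exists_ne l
    exact (hoff hj'.symm hl).trans (hoff hj' (by simp))
  · exact hoff hlj hl

end RowUnipotents

section CommGroupRepresentations

variable {A W : Type*} [CommGroup A] [AddCommGroup W] [Module ℂ W]

/-- The tensor product of a representation with a linear character. -/
def twistRepresentation (ψ : A →* ℂˣ) (ρ : Representation ℂ A W) : Representation ℂ A W where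
  toFun a := (ψ a : ℂ) • ρ a
  map_one' := by simp
  map_mul' a b := by simp [smul_smul, mul_comm]

theorem twistRepresentation_apply (ψ : A →* ℂˣ) (ρ : Representation ℂ A W) (a : A) :
    twistRepresentation ψ ρ a = (ψ a : ℂ) • ρ a := rfl

theorem character_twistRepresentation (ψ : A →* ℂˣ) (ρ : Representation ℂ A W) (a : A) :
    (twistRepresentation ψ ρ).character a = ψ a * ρ.character a := by
  simp [Representation.character, twistRepresentation_apply]

variable [FiniteDimensional ℂ W]

theorem sum_mul_character_of_forall_ne_one [Fintype A] {ρ : Representation ℂ A W} {c : ℂ}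
    (hc : ∀ a ≠ 1, ρ.character a = c) (ψ : A →* ℂˣ) :
    ∑ a, (ψ a : ℂ) * ρ.character a = c * ∑ a, (ψ a : ℂ) + (Module.finrank ℂ W - c) := by
  classical
  have hsplit (a : A) : (ψ a : ℂ) * ρ.character a =
      c * ψ a + if a = 1 then Module.finrank ℂ W - c else 0 := by
    rcases eq_or_ne a 1 with rfl | ha
    · simp
    · simp [hc a ha, ha, mul_comm]
  rw [Finset.sum_congr rfl fun a _ => hsplit a, Finset.sum_add_distrib, ← Finset.mul_sum,
    Finset.sum_ite_eq' Finset.univ, if_pos (Finset.mem_univ _)]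

variable [Finite A]

theorem finrank_add_finrank_invariants_twist {ρ : Representation ℂ A W} {c : ℂ}
    (hc : ∀ a ≠ 1, ρ.character a = c) {ψ : A →* ℂˣ} (hψ : ψ ≠ 1) :
    Module.finrank ℂ W + Module.finrank ℂ (twistRepresentation ψ ρ).invariants =
      Module.finrank ℂ ρ.invariants +
        Nat.card A * Module.finrank ℂ (twistRepresentation ψ ρ).invariants := by
  have := Fintype.ofFinite A
  have hA : (Nat.card A : ℂ) ≠ 0 := Nat.cast_ne_zero.2 Nat.card_pos.ne'
  have := invertibleOfNonzero hA
  have hsum : ∑ a, (ψ a : ℂ) = 0 := by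
    refine sum_hom_units_eq_zero ((Units.coeHom ℂ).comp ψ) fun h => hψ ?_
    ext a
    exact DFunLike.congr_fun h a
  have htwist := (twistRepresentation ψ ρ).card_inv_mul_sum_char_eq_finrank
  have htriv := ρ.card_inv_mul_sum_char_eq_finrank
  have htriv_sum := sum_mul_character_of_forall_ne_one hc 1
  simp only [MonoidHom.one_apply, Units.val_one, one_mul, Finset.sum_const, Finset.card_univ,
    nsmul_eq_mul, mul_one, ← Nat.card_eq_fintype_card] at htriv_sum
  simp only [character_twistRepresentation] at htwist
  rw [sum_mul_character_of_forall_ne_one hc, hsum, inv_mul_eq_iff_eq_mul₀ hA] at htwist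
  rw [htriv_sum, inv_mul_eq_iff_eq_mul₀ hA] at htriv
  have hcast : (Nat.card A : ℂ) * (Module.finrank ℂ W +
        Module.finrank ℂ (twistRepresentation ψ ρ).invariants) =
      Nat.card A * (Module.finrank ℂ ρ.invariants +
        Nat.card A * Module.finrank ℂ (twistRepresentation ψ ρ).invariants) := by
    linear_combination htriv + ((Nat.card A : ℂ) - 1) * htwist
  exact_mod_cast mul_left_cancel₀ hA hcast

theorem card_le_finrank_add_one {ρ : Representation ℂ A W} {c : ℂ}
    (hc : ∀ a ≠ 1, ρ.character a = c) (hρ : ∃ a, ρ a ≠ 1) :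
    Nat.card A ≤ Module.finrank ℂ W + 1 := by
  obtain ⟨a, ha⟩ := hρ
  have ha1 : a ≠ 1 := by
    rintro rfl
    exact ha (map_one ρ)
  obtain ⟨ψ, hψ⟩ := CommGroup.exists_apply_ne_one_of_hasEnoughRootsOfUnity A ℂ ha1
  have hψ1 : ψ ≠ 1 := by
    rintro rfl
    exact hψ rfl
  have hdim := finrank_add_finrank_invariants_twist hc hψ1
  rcases Nat.eq_zero_or_pos (Module.finrank ℂ (twistRepresentation ψ ρ).invariants) with hs | hs
  · have htop : ρ.invariants = ⊤ := Submodule.eq_top_of_finrank_eq (by simpa [hs] using hdim.symm)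
    refine absurd (LinearMap.ext fun v => ?_) ha
    exact (ρ.mem_invariants v).1 (htop ▸ Submodule.mem_top) a
  · nlinarith [Nat.card_pos (α := A)]

end CommGroupRepresentations

section UnitaryRepresentations

open Matrix

variable {G : Type*} [Group G] {k : ℕ} (π : G →* unitaryGroup (Fin k) ℂ)

/-- A homomorphism to a unitary group, as a representation on the space of column vectors. -/
def unitaryRepresentation : Representation ℂ G (Fin k → ℂ) :=
  ((toLinAlgEquiv' : Matrix (Fin k) (Fin k) ℂ ≃ₐ[ℂ] _) : _ →* _).comp
    ((unitaryGroup (Fin k) ℂ).subtype.comp π)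

theorem unitaryRepresentation_apply (g : G) : unitaryRepresentation π g = toLin' (π g).1 := rfl

theorem character_unitaryRepresentation (g : G) :
    (unitaryRepresentation π).character g = trace (π g).1 :=
  trace_toLin'_eq _

theorem unitaryRepresentation_apply_eq_one_iff {g : G} :
    unitaryRepresentation π g = 1 ↔ π g = 1 := by
  rw [unitaryRepresentation_apply, Module.End.one_eq_id, ← toLin'_one,
    (toLin' (R := ℂ)).injective.eq_iff, ← UnitaryGroup.one_val, Subtype.coe_inj]

variable {π}

theorem isIrreducible_unitaryRepresentation [NeZero k] (hπ : IsIrreducibleRep π) :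
    (unitaryRepresentation π).IsIrreducible where
  exists_pair_ne := ⟨⊥, ⊤, fun h => bot_ne_top (congrArg Subrepresentation.toSubmodule h)⟩
  eq_bot_or_eq_top W := (hπ W.toSubmodule fun g _ hv => W.apply_mem_toSubmodule g hv).imp
    (Subrepresentation.toSubmodule_injective ·) (Subrepresentation.toSubmodule_injective ·)

theorem sum_norm_trace_sq [Fintype G] [NeZero k] (hπ : IsIrreducibleRep π) :
    ∑ g, ‖trace (π g).1‖ ^ 2 = Nat.card G := by
  have hG : (Nat.card G : ℂ) ≠ 0 := Nat.cast_ne_zero.2 Nat.card_pos.ne'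
  have := invertibleOfNonzero hG
  have := isIrreducible_unitaryRepresentation hπ
  have horth := (unitaryRepresentation π).char_orthonormal (unitaryRepresentation π)
  have hinv (g : G) : trace (π g⁻¹).1 = starRingEnd ℂ (trace (π g).1) := by
    rw [map_inv, UnitaryGroup.inv_val, star_eq_conjTranspose, trace_conjTranspose,
      starRingEnd_apply]
  rw [if_pos ⟨Representation.Equiv.refl _⟩, inv_mul_eq_iff_eq_mul₀ hG, mul_one] at horth
  simp only [character_unitaryRepresentation, hinv, RCLike.mul_conj] at horth
  exact RCLike.ofReal_injective (K := ℂ) (by push_cast; exact horth)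

theorem norm_trace_sq_le_card_centralizer [Finite G] [NeZero k] (hπ : IsIrreducibleRep π) (g : G) :
    ‖trace (π g).1‖ ^ 2 ≤ Nat.card (Subgroup.centralizer {g}) := by
  classical
  have := Fintype.ofFinite G
  let O := MulAction.orbit (ConjAct G) g
  have hconst (x : G) (hx : x ∈ O.toFinset) : ‖trace (π x).1‖ ^ 2 = ‖trace (π g).1‖ ^ 2 := by
    obtain ⟨h, rfl⟩ := Set.mem_toFinset.1 hx
    simp only [← character_unitaryRepresentation]
    rw [ConjAct.smul_def, Representation.char_conj]
  have hcard : Nat.card (Subgroup.centralizer {g}) * O.ncard = Nat.card G := by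
    rw [Subgroup.nat_card_centralizer_nat_card_stabilizer, ← MulAction.index_stabilizer,
      Subgroup.card_mul_index]
    rfl
  have hO : (0 : ℝ) < O.ncard :=
    Nat.cast_pos.2 ((Set.ncard_pos (Set.toFinite _)).2 ⟨g, MulAction.mem_orbit_self g⟩)
  refine le_of_mul_le_mul_left ?_ hO
  calc (O.ncard : ℝ) * ‖trace (π g).1‖ ^ 2 = ∑ x ∈ O.toFinset, ‖trace (π x).1‖ ^ 2 := by
        rw [Finset.sum_congr rfl hconst, Finset.sum_const, nsmul_eq_mul,
          Set.ncard_eq_toFinset_card']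
    _ ≤ ∑ x, ‖trace (π x).1‖ ^ 2 :=
        Finset.sum_le_univ_sum_of_nonneg fun _ => sq_nonneg _
    _ = O.ncard * Nat.card (Subgroup.centralizer {g}) := by
        rw [sum_norm_trace_sq hπ, ← hcard, mul_comm, Nat.cast_mul]

theorem card_pow_le_add_one_of_nontrivial {F : Type*} [Field F] [Finite F] {m : ℕ} (hm : 2 ≤ m)
    {π : SpecialLinearGroup (Fin (m + 1)) F →* unitaryGroup (Fin k) ℂ} (hπ : ∃ g, π g ≠ 1) :
    Nat.card F ^ m ≤ k + 1 := by
  have : Nontrivial (Fin m) := Fin.nontrivial_iff_two_le.2 hm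
  let ρ : Representation ℂ (Multiplicative (Fin m → F)) (Fin k → ℂ) :=
    (unitaryRepresentation π).comp rowUnipotent
  let j : Fin m := ⟨0, by omega⟩
  have hconst (a : Multiplicative (Fin m → F)) (ha : a ≠ 1) :
      ρ.character a =
        (unitaryRepresentation π).character (rowUnipotent (.ofAdd (Pi.single j 1))) := by
    obtain ⟨g, hg⟩ := isConj_iff.1 (isConj_rowUnipotent_single (a := a.toAdd) ha j)
    rw [← hg, Representation.char_conj]
    rfl
  have hne : ∃ a, ρ a ≠ 1 := by
    by_contra! htriv
    obtain ⟨g, hg⟩ := hπ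
    refine hg (DFunLike.congr_fun (hom_eq_one_of_row_transvection (by simpa using hm) 0
      fun i hi c => ?_) g)
    obtain ⟨i, rfl⟩ := Fin.exists_succ_eq.2 hi.symm
    rw [← rowUnipotent_single, ← unitaryRepresentation_apply_eq_one_iff]
    exact htriv _
  simpa [Nat.card_congr Multiplicative.toAdd, Nat.card_fun] using card_le_finrank_add_one hconst hne

end UnitaryRepresentations

section AdjugateWords

open Matrix

variable {α ι R S : Type*} [Fintype ι] [DecidableEq ι] [CommRing R] [CommRing S]

/-- The value of a word in the letters `α` and their inverses at a tuple of matrices. Inverses are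
replaced by adjugates, so that the value is polynomial in the entries and makes sense over every
commutative ring; on matrices of determinant one nothing changes. -/
def adjugateWord (A : α → Matrix ι ι R) (L : List (α × Bool)) : Matrix ι ι R :=
  (L.map fun x => cond x.2 (A x.1) (A x.1).adjugate).prod

theorem adjugateWord_nil (A : α → Matrix ι ι R) : adjugateWord A [] = 1 := rfl

theorem adjugateWord_cons (A : α → Matrix ι ι R) (x : α × Bool) (L : List (α × Bool)) :
    adjugateWord A (x :: L) = cond x.2 (A x.1) (A x.1).adjugate * adjugateWord A L := by
  simp [adjugateWord]

theorem map_adjugateWord (f : R →+* S) (A : α → Matrix ι ι R) (L : List (α × Bool)) :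
    f.mapMatrix (adjugateWord A L) = adjugateWord (fun i => f.mapMatrix (A i)) L := by
  induction L with
  | nil => exact map_one f.mapMatrix
  | cons x L ih =>
    rw [adjugateWord_cons, adjugateWord_cons, map_mul, ih, Bool.apply_cond f.mapMatrix,
      RingHom.map_adjugate]

theorem det_adjugateWord_ne_zero [IsDomain R] {A : α → Matrix ι ι R} (hA : ∀ i, (A i).det ≠ 0)
    (L : List (α × Bool)) : (adjugateWord A L).det ≠ 0 := by
  induction L with
  | nil => simp [adjugateWord_nil]
  | cons x L ih =>
    rw [adjugateWord_cons, det_mul]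
    refine mul_ne_zero ?_ ih
    obtain ⟨i, _ | _⟩ := x
    · simpa only [cond_false, det_adjugate] using pow_ne_zero _ (hA i)
    · exact hA i

theorem continuous_adjugateWord {X : Type*} [TopologicalSpace X] [TopologicalSpace R]
    [IsTopologicalRing R] {A : X → α → Matrix ι ι R} (hA : ∀ i, Continuous fun x => A x i)
    (L : List (α × Bool)) : Continuous fun x => adjugateWord (A x) L := by
  induction L with
  | nil => exact continuous_const
  | cons y L ih =>
    simp only [adjugateWord_cons]
    refine Continuous.mul ?_ ih
    obtain ⟨i, _ | _⟩ := y
    · exact (hA i).matrix_adjugate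
    · exact hA i

/-- The matrix whose rows are `v, M v, …, M ^ (n - 1) v`. It is invertible exactly when `v` is a
cyclic vector of `M`. -/
def krylovMatrix {n : ℕ} (M : Matrix (Fin n) (Fin n) R) (v : Fin n → R) :
    Matrix (Fin n) (Fin n) R :=
  of fun i => M ^ (i : ℕ) *ᵥ v

theorem map_krylovMatrix {n : ℕ} (f : R →+* S) (M : Matrix (Fin n) (Fin n) R) (v : Fin n → R) :
    f.mapMatrix (krylovMatrix M v) = krylovMatrix (f.mapMatrix M) (f ∘ v) := by
  ext i j
  simp only [krylovMatrix, RingHom.mapMatrix_apply, map_apply, of_apply, RingHom.map_mulVec]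
  rw [← RingHom.mapMatrix_apply, map_pow, RingHom.mapMatrix_apply]

end AdjugateWords

section PingPong

open Matrix

variable {α : Type*} (c : α × Bool → ℝ)

/-- The ping-pong matrix of the letter `i`: up to scaling it attracts to the line of
`![1, c (i, true)]`, and it degenerates to a matrix of rank one as `t` tends to `0`. -/
def pingPongMatrix (t : ℝ) (i : α) : Matrix (Fin 2) (Fin 2) ℝ :=
  vecMulVec ![1, c (i, true)] ![-c (i, false), 1] -
    t • vecMulVec ![1, c (i, false)] ![-c (i, true), 1]

theorem det_pingPongMatrix (t : ℝ) (i : α) :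
    (pingPongMatrix c t i).det = t * (c (i, true) - c (i, false)) ^ 2 := by
  simp only [pingPongMatrix, det_fin_two, Matrix.sub_apply, Matrix.smul_apply, vecMulVec_apply,
    cons_val_zero, cons_val_one, smul_eq_mul]
  ring

theorem continuous_pingPongMatrix (i : α) : Continuous fun t => pingPongMatrix c t i := by
  unfold pingPongMatrix
  fun_prop

theorem cond_pingPongMatrix_zero (x : α × Bool) :
    cond x.2 (pingPongMatrix c 0 x.1) (pingPongMatrix c 0 x.1).adjugate =
      (cond x.2 1 (-1) : ℝ) • vecMulVec ![1, c x] ![-c (x.1, !x.2), 1] := by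
  obtain ⟨i, _ | _⟩ := x <;> ext a b <;> fin_cases a <;> fin_cases b <;>
    simp [pingPongMatrix, adjugate_fin_two, mul_comm]

variable {c}

theorem exists_adjugateWord_pingPongMatrix_zero (hc : c.Injective) {x : α × Bool}
    {L : List (α × Bool)} (hL : FreeGroup.IsReduced (x :: L)) :
    ∃ a : ℝ, a ≠ 0 ∧ ∀ z ∈ (x :: L).getLast?, adjugateWord (pingPongMatrix c 0) (x :: L) =
      a • vecMulVec ![1, c x] ![-c (z.1, !z.2), 1] := by
  have hsign (x : α × Bool) : (cond x.2 1 (-1) : ℝ) ≠ 0 := by cases x.2 <;> simp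
  induction L generalizing x with
  | nil =>
    refine ⟨cond x.2 1 (-1), hsign x, fun z hz => ?_⟩
    obtain rfl : x = z := by simpa using hz
    rw [adjugateWord_cons, adjugateWord_nil, mul_one, cond_pingPongMatrix_zero]
  | cons y L ih =>
    obtain ⟨hxy, hL⟩ := List.isChain_cons_cons.1 hL
    obtain ⟨a, ha, hword⟩ := ih hL
    have hne : ![-c (x.1, !x.2), 1] ⬝ᵥ ![1, c y] ≠ 0 := by
      rw [vec2_dotProduct', mul_one, one_mul, neg_add_eq_sub, sub_ne_zero]
      rintro h
      obtain rfl := hc h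
      simpa using hxy rfl
    refine ⟨cond x.2 1 (-1) * (a * _), mul_ne_zero (hsign x) (mul_ne_zero ha hne), fun z hz => ?_⟩
    rw [adjugateWord_cons, hword z (by simpa using hz), cond_pingPongMatrix_zero, smul_mul_assoc,
      mul_smul_comm, vecMulVec_mul_vecMulVec, vecMulVec_smul, smul_smul, smul_smul, mul_assoc]

theorem smul_vecMulVec_pow_succ_mulVec {ι R : Type*} [Fintype ι] [DecidableEq ι] [CommRing R]
    (a : R) (u f v : ι → R) (m : ℕ) :
    (a • vecMulVec u f) ^ (m + 1) *ᵥ v = ((a * (f ⬝ᵥ u)) ^ m * (a * (f ⬝ᵥ v))) • u := by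
  have hmul (v : ι → R) : (a • vecMulVec u f) *ᵥ v = (a * (f ⬝ᵥ v)) • u := by
    rw [smul_mulVec, vecMulVec_mulVec, op_smul_eq_smul, smul_smul]
  induction m with
  | zero => simp [hmul]
  | succ m ih =>
    rw [pow_succ', ← mulVec_mulVec, ih, mulVec_smul, hmul, smul_smul]
    ring_nf

theorem det_of_mulVec_pair {R : Type*} [CommRing R] (M : Matrix (Fin 2) (Fin 2) R)
    (v w : Fin 2 → R) : (of ![M *ᵥ v, M *ᵥ w]).det = M.det * (of ![v, w]).det := by
  simp only [det_fin_two, of_apply, cons_val_zero, cons_val_one, mulVec, dotProduct,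
    Fin.sum_univ_two]
  ring

theorem det_pingPong_orbit_zero_ne_zero (hc : c.Injective) (hc0 : ∀ x, 0 ≤ c x)
    {L : List (α × Bool)} (hL : L ≠ []) (hcyc : FreeGroup.IsCyclicallyReduced L) (m : ℕ) :
    (of ![![1, -1], adjugateWord (pingPongMatrix c 0) L ^ (m + 1) *ᵥ ![1, -1]]).det ≠ 0 := by
  obtain ⟨x, L, rfl⟩ := List.exists_cons_of_ne_nil hL
  obtain ⟨a, ha, hword⟩ := exists_adjugateWord_pingPongMatrix_zero hc hcyc.1
  let z := (x :: L).getLast hL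
  have hz : z ∈ (x :: L).getLast? := List.getLast?_eq_getLast_of_ne_nil hL
  have hzx : ![-c (z.1, !z.2), 1] ⬝ᵥ ![1, c x] ≠ 0 := by
    rw [vec2_dotProduct', mul_one, one_mul, neg_add_eq_sub, sub_ne_zero]
    rintro h
    have hxz := hcyc.2 z hz x rfl
    rw [hc h] at hxz
    simpa using hxz rfl
  have hzv : ![-c (z.1, !z.2), 1] ⬝ᵥ ![1, -1] ≠ 0 := by
    rw [vec2_dotProduct']
    linarith [hc0 (z.1, !z.2)]
  have hvx : (of ![![1, -1], ![1, c x]]).det ≠ 0 := by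
    simp only [det_fin_two, of_apply, cons_val_zero, cons_val_one]
    linarith [hc0 x]
  rw [hword z hz, smul_vecMulVec_pow_succ_mulVec]
  convert mul_ne_zero (mul_ne_zero (pow_ne_zero m (mul_ne_zero ha hzx)) (mul_ne_zero ha hzv)) hvx
    using 1
  simp only [det_fin_two, of_apply, cons_val_zero, cons_val_one, Pi.smul_apply, smul_eq_mul]
  ring

theorem exists_pairwise_det_adjugateWord_orbit_ne_zero [Countable α] {L : List (α × Bool)}
    (hL : L ≠ []) (hcyc : FreeGroup.IsCyclicallyReduced L) (N : ℕ) :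
    ∃ (A : α → Matrix (Fin 2) (Fin 2) ℝ) (v : Fin 2 → ℝ), (∀ i, (A i).det ≠ 0) ∧
      ∀ i j, i < j → j ≤ N →
        (of ![adjugateWord A L ^ i *ᵥ v, adjugateWord A L ^ j *ᵥ v]).det ≠ 0 := by
  obtain ⟨e, he⟩ := exists_injective_nat (α × Bool)
  let c : α × Bool → ℝ := fun x => e x
  have hc : c.Injective := Nat.cast_injective.comp he
  let orbitDet (m : ℕ) (t : ℝ) : ℝ :=
    (of ![![1, -1], adjugateWord (pingPongMatrix c t) L ^ (m + 1) *ᵥ ![1, -1]]).det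
  have hcont (m : ℕ) : Continuous (orbitDet m) := by
    have hword := continuous_adjugateWord (continuous_pingPongMatrix c) L
    simp only [orbitDet, det_fin_two, of_apply, cons_val_zero, cons_val_one]
    fun_prop
  have hnear : ∀ᶠ t in nhdsWithin 0 {0}ᶜ, ∀ m ∈ Finset.range N, orbitDet m t ≠ 0 :=
    (Filter.eventually_all_finset _).2 fun m _ => (hcont m).continuousAt.eventually_ne
      (det_pingPong_orbit_zero_ne_zero hc (fun _ => Nat.cast_nonneg _) hL hcyc m) |>.filter_mono
      nhdsWithin_le_nhds
  obtain ⟨t, horbit, ht⟩ := (hnear.and self_mem_nhdsWithin).exists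
  have hdet (i : α) : (pingPongMatrix c t i).det ≠ 0 := by
    rw [det_pingPongMatrix]
    exact mul_ne_zero ht (pow_ne_zero _ (sub_ne_zero.2 (hc.ne (by simp))))
  refine ⟨pingPongMatrix c t, ![1, -1], hdet, fun i j hij hjN => ?_⟩
  obtain ⟨m, rfl⟩ := Nat.exists_eq_add_of_lt hij
  rw [add_assoc, pow_add, ← mulVec_mulVec, det_of_mulVec_pair, det_pow]
  exact mul_ne_zero (pow_ne_zero _ (det_adjugateWord_ne_zero hdet L))
    (horbit m (Finset.mem_range.2 (by omega)))

end PingPong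

section SymmetricPowers

open Matrix Polynomial

section CommRing

variable {R : Type*} [CommRing R] {n : ℕ}

/-- The values at `v` of the monomials in two variables of total degree `n - 1`. -/
def binaryMonomials (n : ℕ) (v : Fin 2 → R) : Fin n → R :=
  fun j => v 0 ^ (j : ℕ) * v 1 ^ (j.rev : ℕ)

/-- The matrix of the substitution `g` acting on binary forms of degree `n - 1`, in the basis of
monomials. Binary forms are encoded by their dehomogenizations. -/
noncomputable def symPower (n : ℕ) (g : Matrix (Fin 2) (Fin 2) R) : Matrix (Fin n) (Fin n) R :=
  of fun i j =>
    ((C (g 0 0) * X + C (g 0 1)) ^ (i : ℕ) * (C (g 1 0) * X + C (g 1 1)) ^ (i.rev : ℕ)).coeff j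

theorem eval_homogenize_linear_pow (a b : R) (m : ℕ) (v : Fin 2 → R) :
    MvPolynomial.eval v (((C a * X + C b) ^ m).homogenize m) = (a * v 0 + b * v 1) ^ m := by
  have hpow := homogenize_finsetProd (s := Finset.range m) (p := fun _ => C a * X + C b)
    (n := fun _ => 1) fun _ _ => natDegree_linear_le
  simp only [Finset.prod_const, Finset.card_range, Finset.sum_const, smul_eq_mul, mul_one] at hpow
  simp [hpow, homogenize_C_mul]

theorem eval_homogenize_eq_sum (q : R[X]) (m : ℕ) (v : Fin 2 → R) :
    MvPolynomial.eval v (q.homogenize m) =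
      ∑ j : Fin (m + 1), q.coeff j * (v 0 ^ (j : ℕ) * v 1 ^ (j.rev : ℕ)) := by
  simp only [homogenize, map_sum, Finset.Nat.sum_antidiagonal_eq_sum_range_succ_mk,
    Finset.sum_range]
  refine Finset.sum_congr rfl fun j _ => ?_
  rw [MvPolynomial.eval_monomial, Finsupp.prod_fintype _ _ (by simp), Fin.prod_univ_two]
  simp [Fin.val_rev]

theorem symPower_mulVec_binaryMonomials (g : Matrix (Fin 2) (Fin 2) R) (v : Fin 2 → R) :
    symPower n g *ᵥ binaryMonomials n v = binaryMonomials n (g *ᵥ v) := by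
  ext i
  obtain ⟨m, rfl⟩ : ∃ m, n = m + 1 := ⟨n - 1, by have := i.pos; omega⟩
  have hm : (i : ℕ) + (i.rev : ℕ) = m := by rw [Fin.val_rev]; omega
  have hdeg (a b : R) (k : ℕ) : ((C a * X + C b) ^ k).natDegree ≤ k := by
    simpa using natDegree_pow_le_of_le k (natDegree_linear_le (a := a) (b := b))
  have hform := eval_homogenize_eq_sum ((C (g 0 0) * X + C (g 0 1)) ^ (i : ℕ) *
    (C (g 1 0) * X + C (g 1 1)) ^ (i.rev : ℕ)) ((i : ℕ) + (i.rev : ℕ)) v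
  rw [homogenize_mul _ _ (hdeg _ _ _) (hdeg _ _ _), map_mul, eval_homogenize_linear_pow,
    eval_homogenize_linear_pow, hm] at hform
  simpa [binaryMonomials, mulVec, dotProduct, symPower, Fin.sum_univ_two] using hform.symm

theorem binaryMonomials_smul (t : R) (v : Fin 2 → R) :
    binaryMonomials n (t • v) = t ^ (n - 1) • binaryMonomials n v := by
  ext j
  have hn : n - 1 = (j : ℕ) + (j.rev : ℕ) := by rw [Fin.val_rev]; omega
  simp only [binaryMonomials, Pi.smul_apply, smul_eq_mul, hn]
  ring

end CommRing

variable {K : Type*} [Field K] {n : ℕ}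

theorem eq_of_forall_mulVec_binaryMonomials [Infinite K] {A B : Matrix (Fin n) (Fin n) K}
    (h : ∀ v, A *ᵥ binaryMonomials n v = B *ᵥ binaryMonomials n v) : A = B := by
  let x : Fin n → K := fun i => Infinite.natEmbedding K i
  have hx : x.Injective := (Infinite.natEmbedding K).injective.comp Fin.val_injective
  have hV : IsUnit (projVandermonde x 1)ᵀ := by
    rw [isUnit_iff_isUnit_det, det_transpose, ← vandermonde_eq_projVandermonde]
    exact (det_vandermonde_ne_zero_iff.2 hx).isUnit
  refine hV.mul_right_cancel (ext_col fun j => ?_)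
  have hcol : (projVandermonde x 1)ᵀ.col j = binaryMonomials n ![x j, 1] := by
    ext i
    simp [projVandermonde_apply, binaryMonomials]
  rw [← mulVec_single_one, ← mulVec_single_one, ← mulVec_mulVec, ← mulVec_mulVec,
    mulVec_single_one, hcol, h]

theorem symPower_mul [Infinite K] (g h : Matrix (Fin 2) (Fin 2) K) :
    symPower n (g * h) = symPower n g * symPower n h :=
  eq_of_forall_mulVec_binaryMonomials fun v => by
    simp only [← mulVec_mulVec, symPower_mulVec_binaryMonomials]

theorem symPower_one [Infinite K] : symPower n (1 : Matrix (Fin 2) (Fin 2) K) = 1 :=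
  eq_of_forall_mulVec_binaryMonomials fun v => by
    simp only [symPower_mulVec_binaryMonomials, one_mulVec]

theorem symPower_smul [Infinite K] (t : K) (g : Matrix (Fin 2) (Fin 2) K) :
    symPower n (t • g) = t ^ (n - 1) • symPower n g :=
  eq_of_forall_mulVec_binaryMonomials fun v => by
    simp only [symPower_mulVec_binaryMonomials, smul_mulVec, binaryMonomials_smul]

theorem exists_adjugate_symPower [Infinite K] {g : Matrix (Fin 2) (Fin 2) K} (hg : g.det ≠ 0) :
    ∃ s : K, s ≠ 0 ∧ (symPower n g).adjugate = s • symPower n g.adjugate := by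
  have hs : g.det ^ (n - 1) ≠ 0 := pow_ne_zero _ hg
  have hinv : ((g.det ^ (n - 1))⁻¹ • symPower n g.adjugate) * symPower n g = 1 := by
    rw [smul_mul_assoc, ← symPower_mul, adjugate_mul, symPower_smul, symPower_one, smul_smul,
      inv_mul_cancel₀ hs, one_smul]
  have hunit : IsUnit (symPower n g).det := isUnit_det_of_left_inverse hinv
  refine ⟨(symPower n g).det * (g.det ^ (n - 1))⁻¹, mul_ne_zero hunit.ne_zero (inv_ne_zero hs), ?_⟩
  rw [mul_smul, ← inv_eq_left_inv hinv, inv_def, smul_smul, Ring.mul_inverse_cancel _ hunit,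
    one_smul]

theorem exists_adjugateWord_symPower [Infinite K] {α : Type*} {A : α → Matrix (Fin 2) (Fin 2) K}
    (hA : ∀ i, (A i).det ≠ 0) (L : List (α × Bool)) :
    ∃ s : K, s ≠ 0 ∧
      adjugateWord (fun i => symPower n (A i)) L = s • symPower n (adjugateWord A L) := by
  induction L with
  | nil => exact ⟨1, one_ne_zero, by simp [adjugateWord_nil, symPower_one]⟩
  | cons x L ih =>
    obtain ⟨s, hs, hword⟩ := ih
    obtain ⟨r, hr, hletter⟩ : ∃ r : K, r ≠ 0 ∧
        cond x.2 (symPower n (A x.1)) (symPower n (A x.1)).adjugate =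
          r • symPower n (cond x.2 (A x.1) (A x.1).adjugate) := by
      obtain ⟨i, _ | _⟩ := x
      · exact exists_adjugate_symPower (hA i)
      · exact ⟨1, one_ne_zero, (one_smul _ _).symm⟩
    refine ⟨r * s, mul_ne_zero hr hs, ?_⟩
    rw [adjugateWord_cons, adjugateWord_cons, hletter, hword, smul_mul_assoc, mul_smul_comm,
      smul_smul, symPower_mul]

theorem krylovMatrix_smul_symPower [Infinite K] (s : K) (g : Matrix (Fin 2) (Fin 2) K)
    (v : Fin 2 → K) :
    krylovMatrix (s • symPower n g) (binaryMonomials n v) =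
      diagonal (fun i : Fin n => s ^ (i : ℕ)) *
        projVandermonde (fun i => (g ^ (i : ℕ) *ᵥ v) 0) fun i => (g ^ (i : ℕ) *ᵥ v) 1 := by
  have hpow (m : ℕ) : symPower n g ^ m = symPower n (g ^ m) := by
    induction m with
    | zero => rw [pow_zero, pow_zero, symPower_one]
    | succ m ih => rw [pow_succ, pow_succ, ih, symPower_mul]
  ext i j
  rw [diagonal_mul, projVandermonde_apply, krylovMatrix, of_apply, _root_.smul_pow, hpow,
    smul_mulVec, symPower_mulVec_binaryMonomials]
  rfl

theorem exists_det_krylovMatrix_adjugateWord_ne_zero {α : Type*} [Countable α] (n : ℕ)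
    {L : List (α × Bool)} (hL : L ≠ []) (hcyc : FreeGroup.IsCyclicallyReduced L) :
    ∃ (A : α → Matrix (Fin n) (Fin n) ℝ) (v : Fin n → ℝ),
      (krylovMatrix (adjugateWord A L) v).det ≠ 0 := by
  obtain ⟨A, v, hA, hv⟩ := exists_pairwise_det_adjugateWord_orbit_ne_zero hL hcyc n
  obtain ⟨s, hs, hword⟩ := exists_adjugateWord_symPower (n := n) hA L
  refine ⟨fun i => symPower n (A i), binaryMonomials n v, ?_⟩
  rw [hword, krylovMatrix_smul_symPower, det_mul, det_diagonal, det_projVandermonde]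
  refine mul_ne_zero (Finset.prod_ne_zero_iff.2 fun i _ => pow_ne_zero _ hs)
    (Finset.prod_ne_zero_iff.2 fun i _ => Finset.prod_ne_zero_iff.2 fun j hj => ?_)
  have hij := hv i j (Finset.mem_Ioi.1 hj : i < j) j.2.le
  simp only [det_fin_two, of_apply, cons_val_zero, cons_val_one] at hij
  rw [← neg_ne_zero]
  convert hij using 1
  ring

end SymmetricPowers

section CountingZeros

open Matrix

theorem card_zeros_mul_card_le {σ F : Type*} [Fintype σ] [Field F] [Finite F]
    {Q : MvPolynomial σ F} (hQ : Q ≠ 0) :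
    Nat.card {x : σ → F // MvPolynomial.eval x Q = 0} * Nat.card F ≤
      Q.totalDegree * Nat.card F ^ Fintype.card σ := by
  classical
  have := Fintype.ofFinite F
  let e := Fintype.equivFin σ
  have hrename : MvPolynomial.rename e Q ≠ 0 :=
    (map_ne_zero_iff _ (MvPolynomial.rename_injective e e.injective)).2 hQ
  have hzeros : Nat.card {x : σ → F // MvPolynomial.eval x Q = 0} =
      (Finset.filter (fun x => MvPolynomial.eval x (MvPolynomial.rename e Q) = 0)
        (Fintype.piFinset fun _ : Fin (Fintype.card σ) => (Finset.univ : Finset F))).card := by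
    rw [Fintype.piFinset_univ, ← Fintype.card_subtype, ← Nat.card_eq_fintype_card]
    refine Nat.card_congr ((e.arrowCongr (Equiv.refl F)).subtypeEquiv fun x => ?_)
    simp [MvPolynomial.eval_rename, Equiv.arrowCongr, Function.comp_assoc]
  have hSZ := MvPolynomial.schwartz_zippel_totalDegree hrename (Finset.univ : Finset F)
  rw [← hzeros, Finset.card_univ, ← Nat.card_eq_fintype_card,
    div_le_div_iff₀ (by have := Nat.card_pos (α := F); positivity)
      (by exact_mod_cast Nat.card_pos (α := F))] at hSZ
  have hSZ' : Nat.card {x : σ → F // MvPolynomial.eval x Q = 0} * Nat.card F ≤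
      (MvPolynomial.rename e Q).totalDegree * Nat.card F ^ Fintype.card σ := by
    exact_mod_cast hSZ
  exact hSZ'.trans (Nat.mul_le_mul_right _ (Q.totalDegree_rename_le e))

theorem exists_card_int_zeros_mul_card_le {σ : Type*} [Fintype σ] {Q : MvPolynomial σ ℤ}
    (hQ : Q ≠ 0) :
    ∃ N : ℤ, N ≠ 0 ∧ ∀ (F : Type*) [Field F] [Finite F], (N : F) ≠ 0 →
      Nat.card {x : σ → F // MvPolynomial.aeval x Q = 0} * Nat.card F ≤
        Q.totalDegree * Nat.card F ^ Fintype.card σ := by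
  obtain ⟨m, hm⟩ := MvPolynomial.ne_zero_iff.1 hQ
  refine ⟨Q.coeff m, hm, fun F _ _ hN => ?_⟩
  let QF := MvPolynomial.map (Int.castRingHom F) Q
  have hQF : QF ≠ 0 := MvPolynomial.ne_zero_iff.2 ⟨m, by rwa [MvPolynomial.coeff_map]⟩
  have hdeg : QF.totalDegree ≤ Q.totalDegree :=
    Finset.sup_mono (MvPolynomial.support_map_subset _ _)
  simp only [MvPolynomial.aeval_def, algebraMap_int_eq, MvPolynomial.eval₂_eq_eval_map]
  exact (card_zeros_mul_card_le hQF).trans (Nat.mul_le_mul_right _ hdeg)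

variable {α : Type*} {n : ℕ}

/-- A square matrix is cyclic if some vector generates the whole space under its powers. -/
def IsCyclicMatrix {F : Type*} [Field F] (M : Matrix (Fin n) (Fin n) F) : Prop :=
  ∃ v, (krylovMatrix M v).det ≠ 0

/-- The Krylov determinant of a word as a polynomial in the entries of the matrices and of the
vector. -/
noncomputable def krylovWordPolynomial (n : ℕ) (L : List (α × Bool)) :
    MvPolynomial ((α × Fin n × Fin n) ⊕ Fin n) ℤ :=
  (krylovMatrix
    (adjugateWord (fun i => of fun a b => MvPolynomial.X (Sum.inl (i, a, b))) L)
    fun j => MvPolynomial.X (Sum.inr j)).det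

theorem aeval_krylovWordPolynomial {R : Type*} [CommRing R] (L : List (α × Bool))
    (A : α → Matrix (Fin n) (Fin n) R) (v : Fin n → R) :
    MvPolynomial.aeval (Sum.elim (fun t => A t.1 t.2.1 t.2.2) v) (krylovWordPolynomial n L) =
      (krylovMatrix (adjugateWord A L) v).det := by
  rw [krylovWordPolynomial, ← AlgHom.coe_toRingHom, RingHom.map_det, map_krylovMatrix,
    map_adjugateWord]
  congr 3
  · ext i a b
    simp
  · ext j
    simp

theorem krylovWordPolynomial_ne_zero [Countable α] (n : ℕ) {L : List (α × Bool)} (hL : L ≠ [])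
    (hcyc : FreeGroup.IsCyclicallyReduced L) : krylovWordPolynomial n L ≠ 0 := by
  obtain ⟨A, v, hAv⟩ := exists_det_krylovMatrix_adjugateWord_ne_zero n hL hcyc
  intro h
  rw [← aeval_krylovWordPolynomial, h, map_zero] at hAv
  exact hAv rfl

theorem exists_card_not_isCyclicMatrix_adjugateWord_le [Finite α] (n : ℕ)
    {L : List (α × Bool)} (hL : L ≠ []) (hcyc : FreeGroup.IsCyclicallyReduced L) :
    ∃ (N : ℤ) (D : ℕ), N ≠ 0 ∧ ∀ (F : Type*) [Field F] [Finite F], (N : F) ≠ 0 →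
      Nat.card {A : α → Matrix (Fin n) (Fin n) F // ¬IsCyclicMatrix (adjugateWord A L)} *
        Nat.card F ≤ D * Nat.card (α → Matrix (Fin n) (Fin n) F) := by
  have := Fintype.ofFinite α
  obtain ⟨N, hN, hzeros⟩ :=
    exists_card_int_zeros_mul_card_le (krylovWordPolynomial_ne_zero n hL hcyc)
  refine ⟨N, (krylovWordPolynomial n L).totalDegree, hN, fun F _ _ hNF => ?_⟩
  let toZero : {A : α → Matrix (Fin n) (Fin n) F // ¬IsCyclicMatrix (adjugateWord A L)} ×
      (Fin n → F) → {x : (α × Fin n × Fin n) ⊕ Fin n → F //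
        MvPolynomial.aeval x (krylovWordPolynomial n L) = 0} := fun Av =>
    ⟨Sum.elim (fun t => Av.1.1 t.1 t.2.1 t.2.2) Av.2, by
      rw [aeval_krylovWordPolynomial]
      exact not_not.1 (not_exists.1 Av.1.2 Av.2)⟩
  have htoZero : toZero.Injective := by
    rintro ⟨⟨A, hA⟩, v⟩ ⟨⟨B, hB⟩, w⟩ h
    have hfun := congr_fun (Subtype.ext_iff.1 h)
    obtain rfl : A = B := by
      ext i a b
      exact hfun (Sum.inl (i, a, b))
    obtain rfl : v = w := funext fun j => hfun (Sum.inr j)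
    rfl
  have hle := (Nat.mul_le_mul_right (Nat.card F)
    (Nat.card_le_card_of_injective toZero htoZero)).trans (hzeros F hNF)
  have hcard : Nat.card F ^ Fintype.card ((α × Fin n × Fin n) ⊕ Fin n) =
      Nat.card (α → Matrix (Fin n) (Fin n) F) * Nat.card (Fin n → F) := by
    simp [Matrix, Nat.card_fun, pow_add, ← pow_mul, mul_comm, mul_left_comm]
  rw [Nat.card_prod, hcard] at hle
  refine Nat.le_of_mul_le_mul_right ?_ (Nat.card_pos (α := Fin n → F))
  linarith

end CountingZeros

section CountingInSL

open Matrix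

theorem exists_adjugateWord_smul {α ι R : Type*} [Fintype ι] [DecidableEq ι] [CommRing R]
    (t : α → R) (A : α → Matrix ι ι R) (L : List (α × Bool)) :
    ∃ s : R, adjugateWord (fun i => t i • A i) L = s • adjugateWord A L := by
  induction L with
  | nil => exact ⟨1, (one_smul _ _).symm⟩
  | cons x L ih =>
    obtain ⟨s, hs⟩ := ih
    obtain ⟨i, _ | _⟩ := x
    · refine ⟨t i ^ (Fintype.card ι - 1) * s, ?_⟩
      simp only [adjugateWord_cons, hs, cond_false, adjugate_smul, smul_mul_smul_comm]
    · refine ⟨t i * s, ?_⟩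
      simp only [adjugateWord_cons, hs, cond_true, smul_mul_smul_comm]

theorem IsCyclicMatrix.of_smul {F : Type*} [Field F] {n : ℕ} {s : F}
    {M : Matrix (Fin n) (Fin n) F} (h : IsCyclicMatrix (s • M)) : IsCyclicMatrix M := by
  obtain ⟨v, hv⟩ := h
  have hfactor : krylovMatrix (s • M) v =
      diagonal (fun i : Fin n => s ^ (i : ℕ)) * krylovMatrix M v := by
    ext i j
    simp [krylovMatrix, diagonal_mul, _root_.smul_pow, smul_mulVec]
  rw [hfactor, det_mul] at hv
  exact ⟨v, right_ne_zero_of_mul hv⟩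

variable {α ι F : Type*} [Field F]

theorem coe_lift_mk_eq_adjugateWord [Fintype ι] [DecidableEq ι]
    (S : α → SpecialLinearGroup ι F) (L : List (α × Bool)) :
    (FreeGroup.lift S (FreeGroup.mk L) : Matrix ι ι F) = adjugateWord (fun i => (S i).1) L := by
  rw [FreeGroup.lift_mk]
  induction L with
  | nil => rfl
  | cons x L ih =>
    rw [adjugateWord_cons, ← ih]
    obtain ⟨i, _ | _⟩ := x <;> rfl

theorem card_specialLinearGroup_tuples_mul_le [Fintype α] [Finite F] [Fintype ι] [DecidableEq ι]
    [Nonempty ι] {P : (α → Matrix ι ι F) → Prop}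
    (hP : ∀ (u : α → Fˣ) (A : α → Matrix ι ι F), P A → P fun i => (u i : F) • A i) :
    Nat.card {S : α → SpecialLinearGroup ι F // P fun i => (S i).1} *
        Nat.card Fˣ ^ Fintype.card α ≤
      Fintype.card ι ^ Fintype.card α * Nat.card {A // P A} := by
  classical
  have := Fintype.ofFinite F
  let scale : {S : α → SpecialLinearGroup ι F // P fun i => (S i).1} × (α → Fˣ) → {A // P A} :=
    fun x => ⟨fun i => (x.2 i : F) • (x.1.1 i).1, hP x.2 _ x.1.2⟩
  have hfiber (A : {A // P A}) :
      (Finset.univ.filter fun x => scale x = A).card ≤ Fintype.card ι ^ Fintype.card α := by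
    have hroots : (Fintype.piFinset fun i =>
        (Polynomial.nthRoots (Fintype.card ι) (A.1 i).det).toFinset).card ≤
          Fintype.card ι ^ Fintype.card α := by
      rw [Fintype.card_piFinset, ← Finset.card_univ (α := α)]
      exact Finset.prod_le_pow_card _ _ _ fun i _ =>
        (Multiset.toFinset_card_le _).trans (Polynomial.card_nthRoots _ _)
    refine (Finset.card_le_card_of_injOn (fun x i => (x.2 i : F)) ?_ ?_).trans hroots
    · intro x hx
      obtain rfl := (Finset.mem_filter.1 hx).2
      refine Fintype.mem_piFinset.2 fun i => Multiset.mem_toFinset.2 ?_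
      rw [Polynomial.mem_nthRoots Fintype.card_pos]
      exact ((det_smul _ _).trans (by rw [(x.1.1 i).2, mul_one])).symm
    · rintro ⟨⟨S, hS⟩, u⟩ hx ⟨⟨T, hT⟩, v⟩ hy huv
      obtain rfl : u = v := funext fun i => Units.ext (congr_fun huv i)
      have hST := Subtype.ext_iff.1
        ((Finset.mem_filter.1 hx).2.trans (Finset.mem_filter.1 hy).2.symm)
      obtain rfl : S = T := funext fun i => Subtype.ext <|
        smul_right_injective _ (u i).ne_zero (congr_fun hST i)
      rfl
  have hcount := Finset.card_le_mul_card_image_of_maps_to (s := Finset.univ)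
    (fun x _ => Finset.mem_univ (scale x)) _ fun A _ => hfiber A
  rw [Finset.card_univ, Finset.card_univ, ← Nat.card_eq_fintype_card,
    ← Nat.card_eq_fintype_card (α := {A // P A}), Nat.card_prod, Nat.card_fun,
    Nat.card_eq_fintype_card (α := α)] at hcount
  exact hcount

theorem card_generalLinearGroup_le [Finite F] [Fintype ι] [DecidableEq ι] :
    Nat.card (GL ι F) ≤ Nat.card (SpecialLinearGroup ι F) * Nat.card Fˣ := by
  let det : GL ι F →* Fˣ := GeneralLinearGroup.det
  have hker : Nat.card det.ker ≤ Nat.card (SpecialLinearGroup ι F) :=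
    Nat.card_le_card_of_injective
      (fun g => ⟨g.1.1, congrArg Units.val (MonoidHom.mem_ker.1 g.2)⟩)
      fun g h hgh => Subtype.ext (Units.ext (congrArg Subtype.val hgh))
  rw [← det.ker.card_mul_index, Subgroup.index_ker]
  exact Nat.mul_le_mul hker (Subgroup.card_le_card_group _)

variable [Finite F]

theorem card_matrix_le (n : ℕ) :
    Nat.card (Matrix (Fin n) (Fin n) F) ≤ 2 ^ n * Nat.card (GL (Fin n) F) := by
  have := Fintype.ofFinite F
  have hterm (i : Fin n) :
      Fintype.card F ^ n ≤ 2 * (Fintype.card F ^ n - Fintype.card F ^ (i : ℕ)) := by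
    have hpow : 2 * Fintype.card F ^ (i : ℕ) ≤ Fintype.card F ^ n :=
      (Nat.mul_le_mul_right _ Fintype.one_lt_card).trans
        ((pow_succ' _ _).symm.trans_le (Nat.pow_le_pow_right Fintype.card_pos i.2))
    omega
  calc Nat.card (Matrix (Fin n) (Fin n) F) = ∏ _i : Fin n, Fintype.card F ^ n := by
        simp [Matrix]
    _ ≤ ∏ i : Fin n, 2 * (Fintype.card F ^ n - Fintype.card F ^ (i : ℕ)) :=
        Finset.prod_le_prod' fun i _ => hterm i
    _ = 2 ^ n * Nat.card (GL (Fin n) F) := by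
        rw [card_GL_field, Finset.prod_mul_distrib, Finset.prod_const, Finset.card_univ,
          Fintype.card_fin]

theorem card_centralizer_conj {G : Type*} [Group G] (c g : G) :
    Nat.card (Subgroup.centralizer {c * g * c⁻¹}) = Nat.card (Subgroup.centralizer {g}) := by
  rw [Subgroup.nat_card_centralizer_nat_card_stabilizer,
    Subgroup.nat_card_centralizer_nat_card_stabilizer]
  exact Nat.card_congr
    (MulAction.stabilizerEquivStabilizer (g := ConjAct.toConjAct c) rfl).symm.toEquiv

variable {n : ℕ}

theorem card_centralizer_le_of_isCyclicMatrix {g : SpecialLinearGroup (Fin n) F}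
    (hg : IsCyclicMatrix g.1) : Nat.card (Subgroup.centralizer {g}) ≤ Nat.card F ^ n := by
  obtain ⟨v, hv⟩ := hg
  have hcol (x : Subgroup.centralizer {g}) : (x.1 : Matrix (Fin n) (Fin n) F) *
      (krylovMatrix g.1 v)ᵀ = of fun a (i : Fin n) => (g.1 ^ (i : ℕ) *ᵥ (x.1.1 *ᵥ v)) a := by
    have hcomm : Commute (x.1 : Matrix (Fin n) (Fin n) F) g :=
      congrArg (fun h : SpecialLinearGroup (Fin n) F => h.1)
        (Subgroup.mem_centralizer_singleton_iff.1 x.2)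
    ext a i
    rw [of_apply, mulVec_mulVec, ← (hcomm.pow_right i).eq, ← mulVec_mulVec]
    rfl
  have hinj : (fun x : Subgroup.centralizer {g} => x.1.1 *ᵥ v).Injective := by
    intro x y hxy
    have hunit : IsUnit (krylovMatrix g.1 v)ᵀ := by
      rwa [isUnit_iff_isUnit_det, det_transpose, isUnit_iff_ne_zero]
    refine Subtype.ext (Subtype.ext (hunit.mul_right_cancel ?_))
    rw [hcol, hcol, show x.1.1 *ᵥ v = y.1.1 *ᵥ v from hxy]
  simpa [Nat.card_fun] using Nat.card_le_card_of_injective _ hinj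

theorem exists_eq_conj_mk_isCyclicallyReduced {w : FreeGroup α} (hw : w ≠ 1) :
    ∃ (c : FreeGroup α) (L : List (α × Bool)),
      w = c * FreeGroup.mk L * c⁻¹ ∧ L ≠ [] ∧ FreeGroup.IsCyclicallyReduced L := by
  classical
  let L := FreeGroup.reduceCyclically w.toWord
  let c := FreeGroup.mk (FreeGroup.reduceCyclically.conjugator w.toWord)
  have hconj : w = c * FreeGroup.mk L * c⁻¹ := by
    rw [FreeGroup.inv_mk, FreeGroup.mul_mk, FreeGroup.mul_mk,
      FreeGroup.reduceCyclically.conj_conjugator_reduceCyclically, FreeGroup.mk_toWord]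
  refine ⟨c, L, hconj, fun hL => hw ?_,
    FreeGroup.reduceCyclically.isCyclicallyReduced FreeGroup.isReduced_toWord⟩
  rw [hconj, hL, ← FreeGroup.one_eq_mk, mul_one, mul_inv_cancel]

theorem exists_card_not_isCyclicMatrix_specialLinearGroup_le [Finite α] (n : ℕ) [NeZero n]
    {L : List (α × Bool)} (hL : L ≠ []) (hcyc : FreeGroup.IsCyclicallyReduced L) :
    ∃ (N : ℤ) (C : ℕ), N ≠ 0 ∧ ∀ (F : Type*) [Field F] [Finite F], (N : F) ≠ 0 →
      Nat.card {S : α → SpecialLinearGroup (Fin n) F //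
          ¬IsCyclicMatrix (adjugateWord (fun i => (S i).1) L)} * Nat.card F ≤
        C * Nat.card (α → SpecialLinearGroup (Fin n) F) := by
  have := Fintype.ofFinite α
  obtain ⟨N, D, hN, hbad⟩ := exists_card_not_isCyclicMatrix_adjugateWord_le n hL hcyc
  refine ⟨N, n ^ Fintype.card α * D * (2 ^ n) ^ Fintype.card α, hN, fun F _ _ hNF => ?_⟩
  have hscale := card_specialLinearGroup_tuples_mul_le
    (P := fun A : α → Matrix (Fin n) (Fin n) F => ¬IsCyclicMatrix (adjugateWord A L))
    fun u A hA hu => by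
      obtain ⟨s, hs⟩ := exists_adjugateWord_smul (fun i => (u i : F)) A L
      exact hA (hs ▸ hu).of_smul
  rw [Fintype.card_fin] at hscale
  have hmatrix : Nat.card (Matrix (Fin n) (Fin n) F) ≤
      2 ^ n * (Nat.card (SpecialLinearGroup (Fin n) F) * Nat.card Fˣ) :=
    (card_matrix_le n).trans (Nat.mul_le_mul_left _ card_generalLinearGroup_le)
  refine Nat.le_of_mul_le_mul_right ?_ (pow_pos (Nat.card_pos (α := Fˣ)) (Fintype.card α))
  calc _ = Nat.card {S : α → SpecialLinearGroup (Fin n) F //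
          ¬IsCyclicMatrix (adjugateWord (fun i => (S i).1) L)} *
        Nat.card Fˣ ^ Fintype.card α * Nat.card F := by ring
    _ ≤ n ^ Fintype.card α * (D * Nat.card (α → Matrix (Fin n) (Fin n) F)) := by
        refine (Nat.mul_le_mul_right _ hscale).trans ?_
        rw [mul_assoc]
        exact Nat.mul_le_mul_left _ (hbad F hNF)
    _ ≤ n ^ Fintype.card α * (D *
          (2 ^ n * (Nat.card (SpecialLinearGroup (Fin n) F) * Nat.card Fˣ)) ^ Fintype.card α) := by
        rw [Nat.card_fun, Nat.card_eq_fintype_card (α := α)]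
        gcongr
    _ = _ := by
        rw [Nat.card_fun, Nat.card_eq_fintype_card (α := α)]
        ring

theorem exists_card_lt_card_centralizer_lift_le [Finite α] (n : ℕ) [NeZero n] {w : FreeGroup α}
    (hw : w ≠ 1) :
    ∃ (N : ℤ) (C : ℕ), N ≠ 0 ∧ ∀ (F : Type*) [Field F] [Finite F], (N : F) ≠ 0 →
      Nat.card {S : α → SpecialLinearGroup (Fin n) F //
          Nat.card F ^ n < Nat.card (Subgroup.centralizer {FreeGroup.lift S w})} * Nat.card F ≤
        C * Nat.card (α → SpecialLinearGroup (Fin n) F) := by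
  obtain ⟨c, L, rfl, hL, hcyc⟩ := exists_eq_conj_mk_isCyclicallyReduced hw
  obtain ⟨N, C, hN, hbad⟩ := exists_card_not_isCyclicMatrix_specialLinearGroup_le n hL hcyc
  refine ⟨N, C, hN, fun F _ _ hNF => (Nat.mul_le_mul_right _ ?_).trans (hbad F hNF)⟩
  refine Nat.card_le_card_of_injective _ (Subtype.map_injective (fun S hS hcyclic => ?_)
    Function.injective_id)
  rw [map_mul, map_mul, map_inv, card_centralizer_conj] at hS
  refine hS.not_ge (card_centralizer_le_of_isCyclicMatrix ?_)
  rwa [coe_lift_mk_eq_adjugateWord]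

end CountingInSL

section SpectralMeasure

open Matrix Polynomial

theorem trace_aeval_eq_sum_eigenvalues {𝕜 ι : Type*} [RCLike 𝕜] [Fintype ι] [DecidableEq ι]
    {A : Matrix ι ι 𝕜} (hA : A.IsHermitian) (P : ℝ[X]) :
    (aeval A P).trace = ∑ j, ((P.eval (hA.eigenvalues j) : ℝ) : 𝕜) := by
  rw [← cfc_polynomial P A hA.isSelfAdjoint, hA.cfc_eq, IsHermitian.cfc,
    Unitary.conjStarAlgAut_apply, trace_mul_cycle, Unitary.coe_star_mul_self, one_mul,
    trace_diagonal]
  rfl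

variable {k : ℕ} {A : Matrix (Fin k) (Fin k) ℂ}

theorem specMeasure_eq (hA : A.IsHermitian) :
    specMeasure A = (k : ENNReal)⁻¹ • ∑ j, Measure.dirac (hA.eigenvalues j) :=
  dif_pos hA

theorem isProbabilityMeasure_specMeasure [NeZero k] (hA : A.IsHermitian) :
    IsProbabilityMeasure (specMeasure A) := by
  constructor
  simp [specMeasure_eq hA, ENNReal.inv_mul_cancel, NeZero.ne k]

open scoped Matrix.Norms.L2Operator in
theorem ae_specMeasure_abs_le_norm (hA : A.IsHermitian) : ∀ᵐ x ∂(specMeasure A), |x| ≤ ‖A‖ := by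
  rw [specMeasure_eq hA]
  refine Measure.ae_smul_measure ?_ _
  rw [ae_iff, Measure.finsetSum_apply, Finset.sum_eq_zero_iff]
  intro j _
  rw [← ae_iff, ae_dirac_iff (measurableSet_le (by fun_prop) (by fun_prop))]
  have : Nonempty (Fin k) := ⟨j⟩
  exact spectrum.norm_le_norm_of_mem (hA.eigenvalues_mem_spectrum_real j)

theorem integral_eval_specMeasure (hA : A.IsHermitian) (P : ℝ[X]) :
    ((∫ x, P.eval x ∂(specMeasure A) : ℝ) : ℂ) = (k : ℂ)⁻¹ * (aeval A P).trace := by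
  rw [specMeasure_eq hA, integral_smul_measure,
    integral_finsetSum_measure fun j _ => integrable_dirac (by simp),
    trace_aeval_eq_sum_eigenvalues hA]
  simp

end SpectralMeasure

section FreeGroupTraces

open Matrix Polynomial

variable {G : Type*} [Group G] {k d : ℕ} (π : G →* unitaryGroup (Fin k) ℂ) (S : Fin d → G)

theorem Amat_eq_sum :
    Amat π S = ∑ i, ((π (S i)).1 + (π (S i)⁻¹).1) :=
  Finset.sum_congr rfl fun i _ => by
    rw [map_inv, inv_eq_left_inv (congrArg Subtype.val (inv_mul_cancel (π (S i))))]

theorem isHermitian_Amat : (Amat π S).IsHermitian := by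
  rw [Amat_eq_sum, IsHermitian, conjTranspose_sum]
  refine Finset.sum_congr rfl fun i _ => ?_
  rw [map_inv, conjTranspose_add, add_comm]
  congr 1
  exact conjTranspose_conjTranspose _

open scoped Matrix.Norms.L2Operator in
theorem norm_Amat_le [NeZero k] : ‖Amat π S‖ ≤ 2 * d := by
  rw [Amat_eq_sum]
  calc _ ≤ ∑ _ : Fin d, (1 + 1 : ℝ) := norm_sum_le_of_le _ fun i _ => norm_add_le_of_le
        (CStarRing.norm_of_mem_unitary (π (S i)).2).le
        (CStarRing.norm_of_mem_unitary (π (S i)⁻¹).2).le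
    _ = 2 * d := by simp; ring

theorem ae_specMeasure_Amat_abs_le [NeZero k] :
    ∀ᵐ x ∂(specMeasure (Amat π S)), |x| ≤ 2 * (d : ℝ) :=
  (ae_specMeasure_abs_le_norm (isHermitian_Amat π S)).mono fun _ hx => hx.trans (norm_Amat_le π S)

theorem trace_aeval_Amat (P : ℝ[X]) :
    (aeval (Amat π S) P).trace =
      (aeval (freeGroupAdjacency ℝ (Fin d)) P).coeff.sum
        fun w c => (c : ℂ) * (π (FreeGroup.lift S w)).1.trace := by
  let Φ := MonoidAlgebra.lift ℝ (Matrix (Fin k) (Fin k) ℂ) (FreeGroup (Fin d))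
    ((Submonoid.subtype _).comp (π.comp (FreeGroup.lift S)))
  have hΦ : Φ (freeGroupAdjacency ℝ (Fin d)) = Amat π S := by
    simp [Φ, Amat_eq_sum, freeGroupAdjacency]
  rw [← hΦ, aeval_algHom_apply Φ]
  simp [Φ, MonoidAlgebra.lift_apply, Finsupp.sum, trace_sum, trace_smul]

theorem integral_eval_kestenMcKay (hd : 2 ≤ d) (P : ℝ[X]) :
    ∫ x, P.eval x ∂(kestenMcKay d) = (aeval (freeGroupAdjacency ℝ (Fin d)) P).coeff 1 := by
  have := isProbabilityMeasure_kestenMcKay hd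
  have hInt (P : ℝ[X]) : Integrable (fun x => P.eval x) (kestenMcKay d) :=
    integrable_of_ae_abs_le (ae_kestenMcKay_abs_le hd) P.continuous
  let I : ℝ[X] →ₗ[ℝ] ℝ :=
    { toFun := fun P => ∫ x, P.eval x ∂(kestenMcKay d)
      map_add' := fun P Q => by simpa only [eval_add] using integral_add (hInt P) (hInt Q)
      map_smul' := fun c P => by simp only [eval_smul, integral_smul, RingHom.id_apply] }
  let J : ℝ[X] →ₗ[ℝ] ℝ :=
    { toFun := fun P => (aeval (freeGroupAdjacency ℝ (Fin d)) P).coeff 1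
      map_add' := fun P Q => by simp
      map_smul' := fun c P => by simp }
  suffices I = J from LinearMap.congr_fun this P
  refine LinearMap.ext_on_range (span_spherePoly (2 * (d : ℝ) - 1)) fun k => ?_
  change ∫ x, (spherePoly _ k).eval x ∂(kestenMcKay d) =
    (aeval (freeGroupAdjacency ℝ (Fin d)) (spherePoly _ k)).coeff 1
  have h := coeff_aeval_spherePoly (R := ℝ) k (1 : FreeGroup (Fin d))
  rw [Fintype.card_fin] at h
  rw [integral_spherePoly_kestenMcKay hd, h, FreeGroup.norm_one]
  simp only [eq_comm]

end FreeGroupTraces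

section RareEvents

variable {I : Type*} {Ω : I → Type*} {q : I → ℕ}

/-- The events `B i` in the finite sets `Ω i` with uniform probability measures have probability
`O(1 / q i)`, uniformly in `i`. -/
def IsRare (q : I → ℕ) (B : ∀ i, Ω i → Prop) : Prop :=
  ∃ C : ℕ, ∀ i, Nat.card {ω // B i ω} * q i ≤ C * Nat.card (Ω i)

theorem IsRare.exists_mem {ι : Type*} {s : Finset ι} {Q : ι → ∀ i, Ω i → Prop}
    (h : ∀ t ∈ s, IsRare q (Q t)) : IsRare q fun i ω => ∃ t ∈ s, Q t i ω := by
  choose! C hC using h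
  refine ⟨∑ t ∈ s, C t, fun i => ?_⟩
  have hunion : Nat.card {ω // ∃ t ∈ s, Q t i ω} ≤ ∑ t ∈ s, Nat.card {ω // Q t i ω} := by
    have hset : {ω | ∃ t ∈ s, Q t i ω} = ⋃ t ∈ s, {ω | Q t i ω} := by ext; simp
    exact (congrArg Set.ncard hset).trans_le (s.set_ncard_biUnion_le fun t => {ω | Q t i ω})
  calc _ ≤ ∑ t ∈ s, Nat.card {ω // Q t i ω} * q i := by
        rw [← Finset.sum_mul]
        exact Nat.mul_le_mul_right _ hunion
    _ ≤ ∑ t ∈ s, C t * Nat.card (Ω i) := Finset.sum_le_sum fun t ht => hC t ht i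
    _ = _ := (Finset.sum_mul ..).symm

variable [∀ i, Finite (Ω i)] {B : ∀ i, Ω i → Prop}

theorem isRare_of_forall_lt {N C : ℕ}
    (h : ∀ i, N < q i → Nat.card {ω // B i ω} * q i ≤ C * Nat.card (Ω i)) : IsRare q B := by
  refine ⟨max C N, fun i => ?_⟩
  rcases lt_or_ge N (q i) with hN | hN
  · exact (h i hN).trans (Nat.mul_le_mul_right _ (le_max_left C N))
  · rw [mul_comm]
    exact Nat.mul_le_mul (hN.trans (le_max_right C N)) (Finite.card_subtype_le _)

theorem IsRare.mono_of_lt {B' : ∀ i, Ω i → Prop} (h : IsRare q B) (N : ℕ)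
    (hB : ∀ i, N < q i → ∀ ω, B' i ω → B i ω) : IsRare q B' := by
  obtain ⟨C, hC⟩ := h
  exact isRare_of_forall_lt fun i hi =>
    (Nat.mul_le_mul_right _ (Nat.card_mono (Set.toFinite _) (hB i hi))).trans (hC i)

theorem IsRare.exists_one_sub_le [∀ i, Nonempty (Ω i)] (h : IsRare q B) (hq : ∀ i, 0 < q i) :
    ∃ C : ℝ, 0 < C ∧ ∀ i,
      1 - C * (q i : ℝ)⁻¹ ≤ (Nat.card {ω // ¬B i ω} : ℝ) / (Nat.card (Ω i) : ℝ) := by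
  classical
  obtain ⟨C, hC⟩ := h
  refine ⟨C + 1, by positivity, fun i => ?_⟩
  have hsplit : (Nat.card {ω // B i ω} : ℝ) + Nat.card {ω // ¬B i ω} = Nat.card (Ω i) := by
    exact_mod_cast Nat.card_sum.symm.trans (Nat.card_congr (Equiv.sumCompl (B i)))
  have hrare : (Nat.card {ω // B i ω} : ℝ) * q i ≤ C * Nat.card (Ω i) := by exact_mod_cast hC i
  have hΩ : (0 : ℝ) < Nat.card (Ω i) := by exact_mod_cast Nat.card_pos
  have hq' : (0 : ℝ) < q i := by exact_mod_cast hq i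
  rw [le_div_iff₀ hΩ, ← div_eq_mul_inv, sub_mul, one_mul, sub_le_comm, div_mul_eq_mul_div,
    le_div_iff₀ hq', ← eq_sub_of_add_eq hsplit]
  linarith

end RareEvents

section NontrivialIrreps

open Matrix Polynomial

theorem norm_trace_sq_mul_card_le {F : Type*} [Field F] [Finite F] {n k : ℕ} [NeZero k]
    (hn : 3 ≤ n) {π : SpecialLinearGroup (Fin n) F →* unitaryGroup (Fin k) ℂ}
    (hirr : IsIrreducibleRep π) (hπ : ∃ g, π g ≠ 1) {g : SpecialLinearGroup (Fin n) F}
    (hg : Nat.card (Subgroup.centralizer {g}) ≤ Nat.card F ^ n) :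
    ‖(π g).1.trace‖ ^ 2 * Nat.card F ≤ (2 * k : ℝ) ^ 2 := by
  obtain ⟨m, rfl⟩ : ∃ m, n = m + 1 := ⟨n - 1, by omega⟩
  have hdim : Nat.card F ^ m ≤ 2 * k :=
    (card_pow_le_add_one_of_nontrivial (by omega) hπ).trans (by have := NeZero.pos k; omega)
  have hpow : Nat.card F ^ (m + 1) * Nat.card F ≤ (2 * k) ^ 2 := by
    calc _ = Nat.card F ^ (m + 2) := (pow_succ _ _).symm
      _ ≤ Nat.card F ^ (m * 2) := Nat.pow_le_pow_right Nat.card_pos (by omega)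
      _ = (Nat.card F ^ m) ^ 2 := pow_mul ..
      _ ≤ (2 * k) ^ 2 := Nat.pow_le_pow_left hdim 2
  calc _ ≤ (Nat.card F : ℝ) ^ (m + 1) * Nat.card F := by
        gcongr
        exact (norm_trace_sq_le_card_centralizer hirr g).trans (by exact_mod_cast hg)
    _ ≤ _ := by exact_mod_cast hpow

theorem abs_moment_sub_moment_le {G : Type*} [Group G] {k d : ℕ} [NeZero k] (hd : 2 ≤ d)
    (π : G →* unitaryGroup (Fin k) ℂ) (S : Fin d → G) (P : ℝ[X]) {b : ℝ} (hb : 0 ≤ b)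
    (hS : ∀ w ∈ (aeval (freeGroupAdjacency ℝ (Fin d)) P).coeff.support, w ≠ 1 →
      ‖(π (FreeGroup.lift S w)).1.trace‖ ≤ b * k) :
    |∫ x, P.eval x ∂(specMeasure (Amat π S)) - ∫ x, P.eval x ∂(kestenMcKay d)| ≤
      (∑ w ∈ (aeval (freeGroupAdjacency ℝ (Fin d)) P).coeff.support,
        |(aeval (freeGroupAdjacency ℝ (Fin d)) P).coeff w|) * b := by
  classical
  set c := (aeval (freeGroupAdjacency ℝ (Fin d)) P).coeff with hc
  have hk : (k : ℂ) ≠ 0 := Nat.cast_ne_zero.2 (NeZero.ne k)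
  let t (w : FreeGroup (Fin d)) : ℂ := (π (FreeGroup.lift S w)).1.trace
  have hdiff : ((∫ x, P.eval x ∂(specMeasure (Amat π S)) -
      ∫ x, P.eval x ∂(kestenMcKay d) : ℝ) : ℂ) =
      (k : ℂ)⁻¹ * ∑ w ∈ c.support, c w * (t w - if w = 1 then (k : ℂ) else 0) := by
    have hone : ∑ w ∈ c.support, (c w : ℂ) * (if w = 1 then (k : ℂ) else 0) = c 1 * k := by
      simp +contextual
    simp only [mul_sub, Finset.sum_sub_distrib, hone]
    rw [Complex.ofReal_sub, integral_eval_specMeasure (isHermitian_Amat π S), trace_aeval_Amat,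
      integral_eval_kestenMcKay hd, ← hc, mul_left_comm, inv_mul_cancel₀ hk, mul_one]
    rfl
  have hterm (w) (hw : w ∈ c.support) :
      ‖(c w : ℂ) * (t w - if w = 1 then (k : ℂ) else 0)‖ ≤ |c w| * (b * k) := by
    rw [norm_mul, Complex.norm_real, Real.norm_eq_abs]
    gcongr
    split_ifs with h
    · simp only [t, h, map_one, OneMemClass.coe_one, trace_one, Fintype.card_fin, sub_self,
        norm_zero]
      positivity
    · simpa only [sub_zero] using hS w hw h
  rw [← Real.norm_eq_abs, ← Complex.norm_real, hdiff, norm_mul, norm_inv, Complex.norm_natCast]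
  calc _ ≤ (k : ℝ)⁻¹ * ∑ w ∈ c.support, |c w| * (b * k) := by
        gcongr
        exact norm_sum_le_of_le _ hterm
    _ = _ := by
        have hk' : (k : ℝ) ≠ 0 := Nat.cast_ne_zero.2 (NeZero.ne k)
        rw [← Finset.sum_mul]
        field_simp

/-- The nontrivial irreducible unitary representations of the groups `SL n p`, for all primes `p`
at once: the index set over which all implied constants are uniform. -/
structure NontrivialIrrep (n : ℕ) where
  p : ℕ
  prime : p.Prime
  k : ℕ
  π : SL n p →* unitaryGroup (Fin k) ℂ
  irreducible : IsIrreducibleRep π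
  nontrivial : ∃ g, π g ≠ 1

namespace NontrivialIrrep

variable {n d : ℕ}

instance (ρ : NontrivialIrrep n) : Fact ρ.p.Prime := ⟨ρ.prime⟩

instance (ρ : NontrivialIrrep n) : NeZero ρ.k := by
  refine ⟨fun hk => ρ.nontrivial.elim fun g hg => hg (Subtype.ext ?_)⟩
  have : IsEmpty (Fin ρ.k) := by rw [hk]; infer_instance
  exact Subsingleton.elim _ _

theorem isRare_lt_card_centralizer_lift {α : Type*} [Finite α] [NeZero n] {w : FreeGroup α}
    (hw : w ≠ 1) :
    IsRare (fun ρ : NontrivialIrrep n => ρ.p) fun ρ (S : α → SL n ρ.p) =>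
      ρ.p ^ n < Nat.card (Subgroup.centralizer {FreeGroup.lift S w}) := by
  obtain ⟨N, C, hN, hC⟩ := exists_card_lt_card_centralizer_lift_le n hw
  refine isRare_of_forall_lt (N := N.natAbs) (C := C) fun ρ hρ => ?_
  have hcast : (N : ZMod ρ.p) ≠ 0 := by
    rw [Ne, ZMod.intCast_zmod_eq_zero_iff_dvd]
    exact fun h => hρ.not_ge (Nat.le_of_dvd (Int.natAbs_pos.2 hN) (Int.natCast_dvd.1 h))
  simpa only [Nat.card_zmod] using hC (ZMod ρ.p) hcast

theorem isRare_lt_abs_moment_sub_moment (hn : 3 ≤ n) (hd : 2 ≤ d) (P : ℝ[X]) {δ : ℝ} (hδ : 0 < δ) :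
    IsRare (fun ρ : NontrivialIrrep n => ρ.p) fun ρ (S : Fin d → SL n ρ.p) =>
      δ < |∫ x, P.eval x ∂(specMeasure (Amat ρ.π S)) - ∫ x, P.eval x ∂(kestenMcKay d)| := by
  classical
  have : NeZero n := ⟨by omega⟩
  set c := (aeval (freeGroupAdjacency ℝ (Fin d)) P).coeff
  set M := ∑ w ∈ c.support, |c w|
  refine (IsRare.exists_mem (s := c.support.erase 1) fun w hw =>
    isRare_lt_card_centralizer_lift (Finset.ne_of_mem_erase hw)).mono_of_lt
      ⌈(2 * M / δ) ^ 2⌉₊ fun ρ hρ S => ?_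
  contrapose!
  intro hS
  have hp : 0 < √(ρ.p : ℝ) := Real.sqrt_pos.2 (Nat.cast_pos.2 ρ.prime.pos)
  have htrace (w) (hw : w ∈ c.support) (hw1 : w ≠ 1) :
      ‖(ρ.π (FreeGroup.lift S w)).1.trace‖ ≤ 2 / √ρ.p * ρ.k := by
    have h := norm_trace_sq_mul_card_le hn ρ.irreducible ρ.nontrivial
      (by simpa only [Nat.card_zmod] using hS w (Finset.mem_erase.2 ⟨hw1, hw⟩))
    rw [Nat.card_zmod, ← Real.sq_sqrt (Nat.cast_nonneg ρ.p), ← mul_pow] at h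
    rw [div_mul_eq_mul_div, le_div_iff₀ hp]
    exact le_of_sq_le_sq h (by positivity)
  have hlarge : 2 * M / δ ≤ √ρ.p := Real.le_sqrt_of_sq_le (Nat.lt_of_ceil_lt hρ).le
  calc _ ≤ M * (2 / √ρ.p) := abs_moment_sub_moment_le hd ρ.π S P (by positivity) htrace
    _ = 2 * M / √ρ.p := by ring
    _ ≤ δ := (div_le_comm₀ hδ hp).1 hlarge

end NontrivialIrrep

end NontrivialIrreps

/-- Fix n ≥ 3, d ≥ 2, ε > 0. There exists C > 0 (depending only on n, d, ε) such
that for every prime p and every nontrivial irreducible unitary representation π of SLₙ(ℤ/pℤ),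
the proportion of tuples S ∈ SLₙ(ℤ/pℤ)^d with D(μ_{π,S}, f_{2d}) ≤ ε is at least 1 − C·p^{−1}. -/
theorem stmt2 (n d : ℕ) (hn : 3 ≤ n) (hd : 2 ≤ d) (ε : ℝ) (hε : 0 < ε) :
    ∃ C : ℝ, 0 < C ∧
      ∀ (p : ℕ), p.Prime →
        ∀ (k : ℕ) (π : SL n p →* Matrix.unitaryGroup (Fin k) ℂ),
          IsIrreducibleRep π → (∃ g, π g ≠ 1) →
          (1 - C * (p : ℝ)⁻¹) ≤
            (Nat.card {S : Fin d → SL n p //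
                discrepancy (specMeasure (Amat π S)) (kestenMcKay d) ≤ ε} : ℝ) /
              (Nat.card (Fin d → SL n p) : ℝ) := by
  have := isProbabilityMeasure_kestenMcKay hd
  obtain ⟨T, δ, hδ, hT⟩ := exists_moment_test_for_discrepancy hε (ae_kestenMcKay_abs_le hd)
    fun a b hab => kestenMcKay_real_Icc_le hd hab
  have hmoments : IsRare (fun ρ : NontrivialIrrep n => ρ.p) fun ρ (S : Fin d → SL n ρ.p) =>
      ∃ P ∈ T, δ < |∫ x, P.eval x ∂(specMeasure (Amat ρ.π S)) -
        ∫ x, P.eval x ∂(kestenMcKay d)| :=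
    IsRare.exists_mem fun P _ => NontrivialIrrep.isRare_lt_abs_moment_sub_moment hn hd P hδ
  have hdisc : IsRare (fun ρ : NontrivialIrrep n => ρ.p) fun ρ (S : Fin d → SL n ρ.p) =>
      ε < discrepancy (specMeasure (Amat ρ.π S)) (kestenMcKay d) := by
    refine hmoments.mono_of_lt 0 fun ρ _ S => ?_
    contrapose!
    exact hT _ (isProbabilityMeasure_specMeasure (isHermitian_Amat ρ.π S))
      (ae_specMeasure_Amat_abs_le ρ.π S)
  obtain ⟨C, hC, hgood⟩ := hdisc.exists_one_sub_le fun ρ => ρ.prime.pos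
  exact ⟨C, hC, fun p hp k π hirr hπ => by simpa only [not_lt] using hgood ⟨p, hp, k, π, hirr, hπ⟩⟩
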